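/- Let Δ be a program each of whose clauses has no free names. For every natural number i: (1) if θ:Σ and the interpretation T_Δ^i(∅) satisfies θ(G) (where the free variables and names of G are declared in Σ), then there is a finite constraint set ∇ with Σ;θ ⊨ ∇ and Σ;Δ;∇ ⟶ G; (2) if θ:Σ, D is a program clause whose free variables and names are declared in Σ, θ(A) ∈ T_{θ(D)}(T_Δ^i(∅)) but θ(A) ∉ T_Δ^i(∅), then there is a finite constraint set ∇ with Σ;θ ⊨ ∇ and Σ;Δ;∇ ⟶ [D] ⇒ A. -/

import Mathlib

/-!
Completeness of proof search with respect to the iterates of `T_Δ`.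

The claim is proved by induction on the number `i` of iterations. At a fixed stage, the goal part
is a structural induction on `G` (`goalComplete_of_atom`) and the clause part a structural
induction on `D` using the goal part (`clauseComplete_of_goal`); an atom appearing first at stage
`i + 1` is produced by some clause of `Δ` from stage `i`, so the clause part at stage `i` and the
selection rule derive it (`goalComplete_iterate`). The constraint set is assembled along the way:
`{C}` for a constraint goal, `{A' ∼ A}` for a head atom, unions for conjunctions and implications,
and `{∃X. ⋀Φ}` under a variable binder.

For the induction to pass through `И` in clauses, where `T_D` uses an arbitrary fresh name `b` in
place of the bound name `a`, both parts are generalised to instances `π·θ(G)`, `π·θ(D)` renamed by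
a permutation, with the produced atom compared to `θ(A)` only up to `∼`: the swapping `(a b)` is
absorbed into `π`. This is sound because constraint satisfaction is equivariant
(`ConSat.rename`) and the hypothesis rule compares atoms up to `∼`. The transitivity and symmetry
of alpha-equivalence (`Aeq.trans`, `Aeq.symm`) are needed for this.

Bound variables and names are represented by themselves, so a binder may clash with its context:
`∃X` or `∀X` may re-bind a declared `X` to a value different from `θ(X)`, and `Иa` may bind a name
that is not fresh for the values of `θ`. In such a case pinning the old value, `X ≈ θ(X)`, is
satisfied by `θ` but makes the constraints inconsistent under the binder (`rebind_cases`,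
`fresh_cases`). From inconsistent constraints every entailment holds, so only the propositional
skeleton of the goal or clause matters; it holds because the goal is true, or the clause fires, in
the interpretation (`GoalSat.skG`, `skC_of_mem_tOp`), and atoms are derivable because a nonempty
iterate forces some clause of `Δ` to fire on the empty interpretation (`UD.atom_of_incons`).
-/

/-!  Nominal logic programming: common infrastructure. -/

noncomputable section
open scoped Classical
set_option linter.unusedVariables false
set_option linter.unreachableTactic false
set_option linter.unusedTactic false

/-- Sorts of a nominal signature: name sorts `ν`, data sorts `δ`,
and abstraction sorts `⟨ν⟩σ`. -/
inductive NomSort (N D : Type) : Type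
  | name : N → NomSort N D
  | data : D → NomSort N D
  | nabs : N → NomSort N D → NomSort N D

/-- A nominal (many-sorted, first-order) signature. -/
structure NomSig : Type 1 where
  NSort : Type
  DSort : Type
  Func : Type
  Rel : Type
  fArgs : Func → List (NomSort NSort DSort)
  fRes : Func → DSort
  rArgs : Rel → List (NomSort NSort DSort)

/-- Names: countably infinitely many for each name sort. -/
abbrev NomSig.Name (L : NomSig) : Type := L.NSort × ℕ

variable {L : NomSig}

/-- The transposition (a b) acting on names. -/
def swapName (a b c : L.Name) : L.Name :=
  if c = a then b else if c = b then a else c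

/-- Nominal terms (possibly containing variables). -/
inductive Tm (L : NomSig) : Type
  | var : ℕ → Tm L
  | name : L.Name → Tm L
  | app : L.Func → List (Tm L) → Tm L
  | abs : L.Name → Tm L → Tm L

namespace Tm

/-- Apply a renaming of names to every name occurrence (including binding ones). -/
def rename (f : L.Name → L.Name) : Tm L → Tm L
  | var X => var X
  | name c => name (f c)
  | app g ts => app g (ts.attach.map fun x => rename f x.1)
  | abs c t => abs (f c) (rename f t)
decreasing_by
  all_goals simp_wf
  all_goals first
    | (have := List.sizeOf_lt_of_mem x.2; omega)
    | omega

/-- The swapping `(a b)·t`. -/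
def swap (a b : L.Name) (t : Tm L) : Tm L := t.rename (swapName a b)

/-- Apply a substitution of terms for variables. -/
def subst (θ : ℕ → Tm L) : Tm L → Tm L
  | var X => θ X
  | name c => name c
  | app g ts => app g (ts.attach.map fun x => subst θ x.1)
  | abs c t => abs c (subst θ t)
decreasing_by
  all_goals simp_wf
  all_goals first
    | (have := List.sizeOf_lt_of_mem x.2; omega)
    | omega

/-- Syntactic free-name occurrence (a name occurring outside the scope of
an abstraction of the same name). -/
inductive FNa : L.Name → Tm L → Prop
  | name (a : L.Name) : FNa a (name a)
  | app (a : L.Name) (f : L.Func) (ts : List (Tm L)) (t : Tm L) :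
      t ∈ ts → FNa a t → FNa a (app f ts)
  | abs (a b : L.Name) (t : Tm L) : a ≠ b → FNa a t → FNa a (abs b t)

/-- Free variable occurrence in a term. -/
inductive FVa : ℕ → Tm L → Prop
  | var (X : ℕ) : FVa X (var X)
  | app (X : ℕ) (f : L.Func) (ts : List (Tm L)) (t : Tm L) :
      t ∈ ts → FVa X t → FVa X (app f ts)
  | abs (X : ℕ) (b : L.Name) (t : Tm L) : FVa X t → FVa X (abs b t)

end Tm

/-- The substitution `[t/X]`. -/
def substSingle (X : ℕ) (t : Tm L) : ℕ → Tm L := fun Y => if Y = X then t else Tm.var Y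

/-- `IsTm t σ`: `t` is a well-sorted ground term of sort `σ`. -/
inductive IsTm : Tm L → NomSort L.NSort L.DSort → Prop
  | name (a : L.Name) : IsTm (Tm.name a) (NomSort.name a.1)
  | app (f : L.Func) (ts : List (Tm L)) :
      ts.length = (L.fArgs f).length →
      (∀ p ∈ ts.zip (L.fArgs f), IsTm p.1 p.2) →
      IsTm (Tm.app f ts) (NomSort.data (L.fRes f))
  | abs (a : L.Name) (t : Tm L) (σ : NomSort L.NSort L.DSort) :
      IsTm t σ → IsTm (Tm.abs a t) (NomSort.nabs a.1 σ)

/-- Well-sortedness of a (possibly open) term relative to a sort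
assignment `vs` for variables. -/
inductive TmS (vs : ℕ → NomSort L.NSort L.DSort) : Tm L → NomSort L.NSort L.DSort → Prop
  | var (X : ℕ) : TmS vs (Tm.var X) (vs X)
  | name (a : L.Name) : TmS vs (Tm.name a) (NomSort.name a.1)
  | app (f : L.Func) (ts : List (Tm L)) :
      ts.length = (L.fArgs f).length →
      (∀ p ∈ ts.zip (L.fArgs f), TmS vs p.1 p.2) →
      TmS vs (Tm.app f ts) (NomSort.data (L.fRes f))
  | abs (a : L.Name) (t : Tm L) (σ : NomSort L.NSort L.DSort) :
      TmS vs t σ → TmS vs (Tm.abs a t) (NomSort.nabs a.1 σ)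

/-- Freshness `a # t` on ground terms. -/
inductive Fresh : L.Name → Tm L → Prop
  | name (a b : L.Name) : a ≠ b → Fresh a (Tm.name b)
  | app (a : L.Name) (f : L.Func) (ts : List (Tm L)) :
      (∀ t ∈ ts, Fresh a t) → Fresh a (Tm.app f ts)
  | absSame (a : L.Name) (t : Tm L) : Fresh a (Tm.abs a t)
  | absDiff (a b : L.Name) (t : Tm L) : a ≠ b → Fresh a t → Fresh a (Tm.abs b t)

/-- Alpha-equivalence `t ≈ u` on ground terms. -/
inductive Aeq : Tm L → Tm L → Prop
  | name (a : L.Name) : Aeq (Tm.name a) (Tm.name a)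
  | app (f : L.Func) (ts us : List (Tm L)) :
      ts.length = us.length → (∀ p ∈ ts.zip us, Aeq p.1 p.2) →
      Aeq (Tm.app f ts) (Tm.app f us)
  | absSame (a : L.Name) (t u : Tm L) : Aeq t u → Aeq (Tm.abs a t) (Tm.abs a u)
  | absDiff (a b : L.Name) (t u : Tm L) :
      Fresh a u → Aeq t (Tm.swap a b u) → Aeq (Tm.abs a t) (Tm.abs b u)

/-- The support of a ground term: the set of names not fresh for it. -/
def suppTm (t : Tm L) : Set L.Name := {a | ¬ Fresh a t}

/-- Finite sort-preserving bijections (permutations) of names. -/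
def IsPerm (π : L.Name → L.Name) : Prop :=
  Function.Bijective π ∧ (∀ a, (π a).1 = a.1) ∧ {a | π a ≠ a}.Finite

/-- `t ∼ u`: equal up to a permutation of names. -/
def SimTm (t u : Tm L) : Prop := ∃ π, IsPerm π ∧ Aeq (t.rename π) u

/-- Atomic formulas `p(t₁,…,tₙ)`. -/
structure NAtom (L : NomSig) : Type where
  rel : L.Rel
  args : List (Tm L)

def NAtom.rename (f : L.Name → L.Name) (A : NAtom L) : NAtom L :=
  ⟨A.rel, A.args.map (Tm.rename f)⟩

def NAtom.swap (a b : L.Name) (A : NAtom L) : NAtom L := A.rename (swapName a b)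

def NAtom.subst (θ : ℕ → Tm L) (A : NAtom L) : NAtom L :=
  ⟨A.rel, A.args.map (Tm.subst θ)⟩

def NAtom.FNa (a : L.Name) (A : NAtom L) : Prop := ∃ t ∈ A.args, Tm.FNa a t
def NAtom.FVa (X : ℕ) (A : NAtom L) : Prop := ∃ t ∈ A.args, Tm.FVa X t

/-- Alpha-equivalence of atoms. -/
def AtomAeq (A B : NAtom L) : Prop :=
  A.rel = B.rel ∧ A.args.length = B.args.length ∧ ∀ p ∈ A.args.zip B.args, Aeq p.1 p.2

/-- `A ∼ B` for atoms: equal up to a permutation of names. -/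
def AtomSim (A B : NAtom L) : Prop := ∃ π, IsPerm π ∧ AtomAeq (A.rename π) B

/-- Well-sortedness of an atom relative to a variable sort assignment. -/
def AtomS (vs : ℕ → NomSort L.NSort L.DSort) (A : NAtom L) : Prop :=
  A.args.length = (L.rArgs A.rel).length ∧ ∀ p ∈ A.args.zip (L.rArgs A.rel), TmS vs p.1 p.2

/-- The Herbrand base: all well-sorted ground atoms. -/
def BL (L : NomSig) : Set (NAtom L) :=
  {A | A.args.length = (L.rArgs A.rel).length ∧ ∀ p ∈ A.args.zip (L.rArgs A.rel), IsTm p.1 p.2}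

/-- An equivariant set of atoms: closed under all same-sorted swappings. -/
def EquivariantSet (S : Set (NAtom L)) : Prop :=
  ∀ a b : L.Name, a.1 = b.1 → NAtom.swap a b '' S = S


/-! ### Constraints -/

/-- Constraints `C`. -/
inductive NCon (L : NomSig) : Type
  | tt : NCon L
  | eq (t u : Tm L) : NCon L
  | fr (a : L.Name) (t : Tm L) : NCon L
  | sim (t u : Tm L) : NCon L
  | simA (A B : NAtom L) : NCon L
  | aeqA (A B : NAtom L) : NCon L
  | and (C C' : NCon L) : NCon L
  | ex (X : ℕ) (σ : NomSort L.NSort L.DSort) (C : NCon L) : NCon L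
  | nu (a : L.Name) (C : NCon L) : NCon L

namespace NCon

def rename (f : L.Name → L.Name) : NCon L → NCon L
  | tt => tt
  | eq t u => eq (t.rename f) (u.rename f)
  | fr a t => fr (f a) (t.rename f)
  | sim t u => sim (t.rename f) (u.rename f)
  | simA A B => simA (A.rename f) (B.rename f)
  | aeqA A B => aeqA (A.rename f) (B.rename f)
  | and C C' => and (rename f C) (rename f C')
  | ex X σ C => ex X σ (rename f C)
  | nu a C => nu (f a) (rename f C)

/-- Swapping `(a b)·C`, acting on all names (bound names included). -/
def swap (a b : L.Name) (C : NCon L) : NCon L := C.rename (swapName a b)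

def subst (θ : ℕ → Tm L) : NCon L → NCon L
  | tt => tt
  | eq t u => eq (t.subst θ) (u.subst θ)
  | fr a t => fr a (t.subst θ)
  | sim t u => sim (t.subst θ) (u.subst θ)
  | simA A B => simA (A.subst θ) (B.subst θ)
  | aeqA A B => aeqA (A.subst θ) (B.subst θ)
  | and C C' => and (subst θ C) (subst θ C')
  | ex X σ C => ex X σ (subst (Function.update θ X (Tm.var X)) C)
  | nu a C => nu a (subst θ C)

def size : NCon L → ℕ
  | and C C' => size C + size C' + 1
  | ex _ _ C => size C + 1
  | nu _ C => size C + 1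
  | _ => 1

@[simp] theorem size_rename (f : L.Name → L.Name) :
    ∀ C : NCon L, (C.rename f).size = C.size := by
  intro C; induction C <;> simp [rename, size, *]

@[simp] theorem size_swap (a b : L.Name) (C : NCon L) : (C.swap a b).size = C.size :=
  size_rename _ C

@[simp] theorem size_subst :
    ∀ (C : NCon L) (θ : ℕ → Tm L), (C.subst θ).size = C.size := by
  intro C; induction C <;> intro θ <;> simp [subst, size, *]

/-- Free names of a constraint. -/
inductive FNa : L.Name → NCon L → Prop
  | eq₁ (a : L.Name) (t u : Tm L) : Tm.FNa a t → FNa a (eq t u)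
  | eq₂ (a : L.Name) (t u : Tm L) : Tm.FNa a u → FNa a (eq t u)
  | frN (a : L.Name) (t : Tm L) : FNa a (fr a t)
  | frT (a c : L.Name) (t : Tm L) : Tm.FNa a t → FNa a (fr c t)
  | sim₁ (a : L.Name) (t u : Tm L) : Tm.FNa a t → FNa a (sim t u)
  | sim₂ (a : L.Name) (t u : Tm L) : Tm.FNa a u → FNa a (sim t u)
  | simA₁ (a : L.Name) (A B : NAtom L) : NAtom.FNa a A → FNa a (simA A B)
  | simA₂ (a : L.Name) (A B : NAtom L) : NAtom.FNa a B → FNa a (simA A B)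
  | aeqA₁ (a : L.Name) (A B : NAtom L) : NAtom.FNa a A → FNa a (aeqA A B)
  | aeqA₂ (a : L.Name) (A B : NAtom L) : NAtom.FNa a B → FNa a (aeqA A B)
  | and₁ (a : L.Name) (C C' : NCon L) : FNa a C → FNa a (and C C')
  | and₂ (a : L.Name) (C C' : NCon L) : FNa a C' → FNa a (and C C')
  | ex (a : L.Name) (X : ℕ) (σ : NomSort L.NSort L.DSort) (C : NCon L) :
      FNa a C → FNa a (ex X σ C)
  | nu (a c : L.Name) (C : NCon L) : a ≠ c → FNa a C → FNa a (nu c C)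

/-- Free variables of a constraint. -/
inductive FVa : ℕ → NCon L → Prop
  | eq₁ (X : ℕ) (t u : Tm L) : Tm.FVa X t → FVa X (eq t u)
  | eq₂ (X : ℕ) (t u : Tm L) : Tm.FVa X u → FVa X (eq t u)
  | frT (X : ℕ) (c : L.Name) (t : Tm L) : Tm.FVa X t → FVa X (fr c t)
  | sim₁ (X : ℕ) (t u : Tm L) : Tm.FVa X t → FVa X (sim t u)
  | sim₂ (X : ℕ) (t u : Tm L) : Tm.FVa X u → FVa X (sim t u)
  | simA₁ (X : ℕ) (A B : NAtom L) : NAtom.FVa X A → FVa X (simA A B)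
  | simA₂ (X : ℕ) (A B : NAtom L) : NAtom.FVa X B → FVa X (simA A B)
  | aeqA₁ (X : ℕ) (A B : NAtom L) : NAtom.FVa X A → FVa X (aeqA A B)
  | aeqA₂ (X : ℕ) (A B : NAtom L) : NAtom.FVa X B → FVa X (aeqA A B)
  | and₁ (X : ℕ) (C C' : NCon L) : FVa X C → FVa X (and C C')
  | and₂ (X : ℕ) (C C' : NCon L) : FVa X C' → FVa X (and C C')
  | ex (X X' : ℕ) (σ : NomSort L.NSort L.DSort) (C : NCon L) :
      X ≠ X' → FVa X C → FVa X (ex X' σ C)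
  | nu (X : ℕ) (c : L.Name) (C : NCon L) : FVa X C → FVa X (nu c C)

/-- Well-sortedness of a constraint relative to a variable sort assignment. -/
def WS (vs : ℕ → NomSort L.NSort L.DSort) : NCon L → Prop
  | tt => True
  | eq t u => ∃ σ, TmS vs t σ ∧ TmS vs u σ
  | fr _ t => ∃ σ, TmS vs t σ
  | sim t u => ∃ σ, TmS vs t σ ∧ TmS vs u σ
  | simA A B => AtomS vs A ∧ AtomS vs B
  | aeqA A B => AtomS vs A ∧ AtomS vs B
  | and C C' => WS vs C ∧ WS vs C'
  | ex X σ C => WS (Function.update vs X σ) C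
  | nu _ C => WS vs C

end NCon

/-- Satisfaction `⊨ C` of a (closed) constraint. -/
def ConSat : NCon L → Prop
  | NCon.tt => True
  | NCon.eq t u => Aeq t u
  | NCon.fr a t => Fresh a t
  | NCon.sim t u => SimTm t u
  | NCon.simA A B => AtomSim A B
  | NCon.aeqA A B => AtomAeq A B
  | NCon.and C C' => ConSat C ∧ ConSat C'
  | NCon.ex X σ C => ∃ t : Tm L, IsTm t σ ∧ ConSat (C.subst (substSingle X t))
  | NCon.nu a C => ∀ b : L.Name, b.1 = a.1 → ¬ NCon.FNa b (NCon.nu a C) → ConSat (C.swap b a)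
termination_by C => C.size
decreasing_by all_goals (simp [NCon.size]; try omega)
/-! ### Goals -/

/-- Goal formulas `G`. -/
inductive NGoal (L : NomSig) : Type
  | tt : NGoal L
  | atom (A : NAtom L) : NGoal L
  | con (C : NCon L) : NGoal L
  | and (G G' : NGoal L) : NGoal L
  | or (G G' : NGoal L) : NGoal L
  | ex (X : ℕ) (σ : NomSort L.NSort L.DSort) (G : NGoal L) : NGoal L
  | nu (a : L.Name) (G : NGoal L) : NGoal L

namespace NGoal

def rename (f : L.Name → L.Name) : NGoal L → NGoal L
  | tt => tt
  | atom A => atom (A.rename f)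
  | con C => con (C.rename f)
  | and G G' => and (rename f G) (rename f G')
  | or G G' => or (rename f G) (rename f G')
  | ex X σ G => ex X σ (rename f G)
  | nu a G => nu (f a) (rename f G)

def swap (a b : L.Name) (G : NGoal L) : NGoal L := G.rename (swapName a b)

def subst (θ : ℕ → Tm L) : NGoal L → NGoal L
  | tt => tt
  | atom A => atom (A.subst θ)
  | con C => con (C.subst θ)
  | and G G' => and (subst θ G) (subst θ G')
  | or G G' => or (subst θ G) (subst θ G')
  | ex X σ G => ex X σ (subst (Function.update θ X (Tm.var X)) G)
  | nu a G => nu a (subst θ G)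

def size : NGoal L → ℕ
  | and G G' => size G + size G' + 1
  | or G G' => size G + size G' + 1
  | ex _ _ G => size G + 1
  | nu _ G => size G + 1
  | _ => 1

@[simp] theorem size_rename (f : L.Name → L.Name) :
    ∀ G : NGoal L, (G.rename f).size = G.size := by
  intro G; induction G <;> simp [rename, size, *]

@[simp] theorem size_swap (a b : L.Name) (G : NGoal L) : (G.swap a b).size = G.size :=
  size_rename _ G

@[simp] theorem size_subst :
    ∀ (G : NGoal L) (θ : ℕ → Tm L), (G.subst θ).size = G.size := by
  intro G; induction G <;> intro θ <;> simp [subst, size, *]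

/-- Free names of a goal. -/
inductive FNa : L.Name → NGoal L → Prop
  | atom (a : L.Name) (A : NAtom L) : NAtom.FNa a A → FNa a (atom A)
  | con (a : L.Name) (C : NCon L) : NCon.FNa a C → FNa a (con C)
  | and₁ (a : L.Name) (G G' : NGoal L) : FNa a G → FNa a (and G G')
  | and₂ (a : L.Name) (G G' : NGoal L) : FNa a G' → FNa a (and G G')
  | or₁ (a : L.Name) (G G' : NGoal L) : FNa a G → FNa a (or G G')
  | or₂ (a : L.Name) (G G' : NGoal L) : FNa a G' → FNa a (or G G')
  | ex (a : L.Name) (X : ℕ) (σ : NomSort L.NSort L.DSort) (G : NGoal L) :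
      FNa a G → FNa a (ex X σ G)
  | nu (a c : L.Name) (G : NGoal L) : a ≠ c → FNa a G → FNa a (nu c G)

/-- Free variables of a goal. -/
inductive FVa : ℕ → NGoal L → Prop
  | atom (X : ℕ) (A : NAtom L) : NAtom.FVa X A → FVa X (atom A)
  | con (X : ℕ) (C : NCon L) : NCon.FVa X C → FVa X (con C)
  | and₁ (X : ℕ) (G G' : NGoal L) : FVa X G → FVa X (and G G')
  | and₂ (X : ℕ) (G G' : NGoal L) : FVa X G' → FVa X (and G G')
  | or₁ (X : ℕ) (G G' : NGoal L) : FVa X G → FVa X (or G G')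
  | or₂ (X : ℕ) (G G' : NGoal L) : FVa X G' → FVa X (or G G')
  | ex (X X' : ℕ) (σ : NomSort L.NSort L.DSort) (G : NGoal L) :
      X ≠ X' → FVa X G → FVa X (ex X' σ G)
  | nu (X : ℕ) (c : L.Name) (G : NGoal L) : FVa X G → FVa X (nu c G)

/-- Well-sortedness of a goal relative to a variable sort assignment. -/
def WS (vs : ℕ → NomSort L.NSort L.DSort) : NGoal L → Prop
  | tt => True
  | atom A => AtomS vs A
  | con C => NCon.WS vs C
  | and G G' => WS vs G ∧ WS vs G'
  | or G G' => WS vs G ∧ WS vs G'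
  | ex X σ G => WS (Function.update vs X σ) G
  | nu _ G => WS vs G

end NGoal

/-- Satisfaction `S ⊨ G` of a (closed) goal by a Herbrand interpretation. -/
def GoalSat (S : Set (NAtom L)) : NGoal L → Prop
  | NGoal.tt => True
  | NGoal.atom A => A ∈ S
  | NGoal.con C => ConSat C
  | NGoal.and G G' => GoalSat S G ∧ GoalSat S G'
  | NGoal.or G G' => GoalSat S G ∨ GoalSat S G'
  | NGoal.ex X σ G => ∃ t : Tm L, IsTm t σ ∧ GoalSat S (G.subst (substSingle X t))
  | NGoal.nu a G => ∀ b : L.Name, b.1 = a.1 → ¬ NGoal.FNa b (NGoal.nu a G) →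
      GoalSat S (G.swap b a)
termination_by G => G.size
decreasing_by all_goals (simp [NGoal.size]; try omega)

/-! ### Program clauses -/

/-- Program clauses `D`. -/
inductive NCl (L : NomSig) : Type
  | tt : NCl L
  | atom (A : NAtom L) : NCl L
  | and (D D' : NCl L) : NCl L
  | imp (G : NGoal L) (D : NCl L) : NCl L
  | all (X : ℕ) (σ : NomSort L.NSort L.DSort) (D : NCl L) : NCl L
  | nu (a : L.Name) (D : NCl L) : NCl L

namespace NCl

def rename (f : L.Name → L.Name) : NCl L → NCl L
  | tt => tt
  | atom A => atom (A.rename f)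
  | and D D' => and (rename f D) (rename f D')
  | imp G D => imp (G.rename f) (rename f D)
  | all X σ D => all X σ (rename f D)
  | nu a D => nu (f a) (rename f D)

def swap (a b : L.Name) (D : NCl L) : NCl L := D.rename (swapName a b)

def subst (θ : ℕ → Tm L) : NCl L → NCl L
  | tt => tt
  | atom A => atom (A.subst θ)
  | and D D' => and (subst θ D) (subst θ D')
  | imp G D => imp (G.subst θ) (subst θ D)
  | all X σ D => all X σ (subst (Function.update θ X (Tm.var X)) D)
  | nu a D => nu a (subst θ D)

def size : NCl L → ℕ
  | and D D' => size D + size D' + 1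
  | imp _ D => size D + 1
  | all _ _ D => size D + 1
  | nu _ D => size D + 1
  | _ => 1

@[simp] theorem size_rename (f : L.Name → L.Name) :
    ∀ D : NCl L, (D.rename f).size = D.size := by
  intro D; induction D <;> simp [rename, size, *]

@[simp] theorem size_swap (a b : L.Name) (D : NCl L) : (D.swap a b).size = D.size :=
  size_rename _ D

@[simp] theorem size_subst :
    ∀ (D : NCl L) (θ : ℕ → Tm L), (D.subst θ).size = D.size := by
  intro D; induction D <;> intro θ <;> simp [subst, size, *]

/-- Free names of a program clause. -/
inductive FNa : L.Name → NCl L → Prop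
  | atom (a : L.Name) (A : NAtom L) : NAtom.FNa a A → FNa a (atom A)
  | and₁ (a : L.Name) (D D' : NCl L) : FNa a D → FNa a (and D D')
  | and₂ (a : L.Name) (D D' : NCl L) : FNa a D' → FNa a (and D D')
  | imp₁ (a : L.Name) (G : NGoal L) (D : NCl L) : NGoal.FNa a G → FNa a (imp G D)
  | imp₂ (a : L.Name) (G : NGoal L) (D : NCl L) : FNa a D → FNa a (imp G D)
  | all (a : L.Name) (X : ℕ) (σ : NomSort L.NSort L.DSort) (D : NCl L) :
      FNa a D → FNa a (all X σ D)
  | nu (a c : L.Name) (D : NCl L) : a ≠ c → FNa a D → FNa a (nu c D)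

/-- Free variables of a program clause. -/
inductive FVa : ℕ → NCl L → Prop
  | atom (X : ℕ) (A : NAtom L) : NAtom.FVa X A → FVa X (atom A)
  | and₁ (X : ℕ) (D D' : NCl L) : FVa X D → FVa X (and D D')
  | and₂ (X : ℕ) (D D' : NCl L) : FVa X D' → FVa X (and D D')
  | imp₁ (X : ℕ) (G : NGoal L) (D : NCl L) : NGoal.FVa X G → FVa X (imp G D)
  | imp₂ (X : ℕ) (G : NGoal L) (D : NCl L) : FVa X D → FVa X (imp G D)
  | all (X X' : ℕ) (σ : NomSort L.NSort L.DSort) (D : NCl L) :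
      X ≠ X' → FVa X D → FVa X (all X' σ D)
  | nu (X : ℕ) (c : L.Name) (D : NCl L) : FVa X D → FVa X (nu c D)

/-- Well-sortedness of a program clause relative to a variable sort assignment. -/
def WS (vs : ℕ → NomSort L.NSort L.DSort) : NCl L → Prop
  | tt => True
  | atom A => AtomS vs A
  | and D D' => WS vs D ∧ WS vs D'
  | imp G D => NGoal.WS vs G ∧ WS vs D
  | all X σ D => WS (Function.update vs X σ) D
  | nu _ D => WS vs D

/-- A clause with no free variables. -/
def ClosedV (D : NCl L) : Prop := ∀ X : ℕ, ¬ FVa X D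

/-- A clause with no free names. -/
def ClosedN (D : NCl L) : Prop := ∀ a : L.Name, ¬ FNa a D

/-- И-goal clauses: no И-quantified clause subformulas (goals may contain И). -/
inductive NuGoal : NCl L → Prop
  | tt : NuGoal tt
  | atom (A : NAtom L) : NuGoal (atom A)
  | and (D D' : NCl L) : NuGoal D → NuGoal D' → NuGoal (and D D')
  | imp (G : NGoal L) (D : NCl L) : NuGoal D → NuGoal (imp G D)
  | all (X : ℕ) (σ : NomSort L.NSort L.DSort) (D : NCl L) : NuGoal D → NuGoal (all X σ D)

end NCl

/-- Satisfaction `S ⊨ D` of a (closed) program clause. -/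
def ClSat (S : Set (NAtom L)) : NCl L → Prop
  | NCl.tt => True
  | NCl.atom A => A ∈ S
  | NCl.and D D' => ClSat S D ∧ ClSat S D'
  | NCl.imp G D => GoalSat S G → ClSat S D
  | NCl.all X σ D => ∀ t : Tm L, IsTm t σ → ClSat S (D.subst (substSingle X t))
  | NCl.nu a D => ∀ b : L.Name, b.1 = a.1 → ¬ NCl.FNa b (NCl.nu a D) →
      ClSat S (D.swap b a)
termination_by D => D.size
decreasing_by all_goals (simp [NCl.size]; try omega)
/-! ### General first-order nominal formulas -/

/-- Formulas of nominal logic. -/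
inductive NFm (L : NomSig) : Type
  | tt : NFm L
  | ff : NFm L
  | atom (A : NAtom L) : NFm L
  | eq (t u : Tm L) : NFm L
  | fr (a : L.Name) (t : Tm L) : NFm L
  | sim (t u : Tm L) : NFm L
  | imp (φ ψ : NFm L) : NFm L
  | and (φ ψ : NFm L) : NFm L
  | or (φ ψ : NFm L) : NFm L
  | all (X : ℕ) (σ : NomSort L.NSort L.DSort) (φ : NFm L) : NFm L
  | ex (X : ℕ) (σ : NomSort L.NSort L.DSort) (φ : NFm L) : NFm L
  | nu (a : L.Name) (φ : NFm L) : NFm L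

namespace NFm

def rename (f : L.Name → L.Name) : NFm L → NFm L
  | tt => tt
  | ff => ff
  | atom A => atom (A.rename f)
  | eq t u => eq (t.rename f) (u.rename f)
  | fr a t => fr (f a) (t.rename f)
  | sim t u => sim (t.rename f) (u.rename f)
  | imp φ ψ => imp (rename f φ) (rename f ψ)
  | and φ ψ => and (rename f φ) (rename f ψ)
  | or φ ψ => or (rename f φ) (rename f ψ)
  | all X σ φ => all X σ (rename f φ)
  | ex X σ φ => ex X σ (rename f φ)
  | nu a φ => nu (f a) (rename f φ)

/-- Swapping `(a b)·φ`. -/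
def swap (a b : L.Name) (φ : NFm L) : NFm L := φ.rename (swapName a b)

def subst (θ : ℕ → Tm L) : NFm L → NFm L
  | tt => tt
  | ff => ff
  | atom A => atom (A.subst θ)
  | eq t u => eq (t.subst θ) (u.subst θ)
  | fr a t => fr a (t.subst θ)
  | sim t u => sim (t.subst θ) (u.subst θ)
  | imp φ ψ => imp (subst θ φ) (subst θ ψ)
  | and φ ψ => and (subst θ φ) (subst θ ψ)
  | or φ ψ => or (subst θ φ) (subst θ ψ)
  | all X σ φ => all X σ (subst (Function.update θ X (Tm.var X)) φ)
  | ex X σ φ => ex X σ (subst (Function.update θ X (Tm.var X)) φ)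
  | nu a φ => nu a (subst θ φ)

def size : NFm L → ℕ
  | imp φ ψ => size φ + size ψ + 1
  | and φ ψ => size φ + size ψ + 1
  | or φ ψ => size φ + size ψ + 1
  | all _ _ φ => size φ + 1
  | ex _ _ φ => size φ + 1
  | nu _ φ => size φ + 1
  | _ => 1

@[simp] theorem size_rename (f : L.Name → L.Name) :
    ∀ φ : NFm L, (φ.rename f).size = φ.size := by
  intro φ; induction φ <;> simp [rename, size, *]

@[simp] theorem size_swap (a b : L.Name) (φ : NFm L) : (φ.swap a b).size = φ.size :=
  size_rename _ φ

@[simp] theorem size_subst :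
    ∀ (φ : NFm L) (θ : ℕ → Tm L), (φ.subst θ).size = φ.size := by
  intro φ; induction φ <;> intro θ <;> simp [subst, size, *]

/-- Free names of a formula. -/
inductive FNa : L.Name → NFm L → Prop
  | atom (a : L.Name) (A : NAtom L) : NAtom.FNa a A → FNa a (atom A)
  | eq₁ (a : L.Name) (t u : Tm L) : Tm.FNa a t → FNa a (eq t u)
  | eq₂ (a : L.Name) (t u : Tm L) : Tm.FNa a u → FNa a (eq t u)
  | frN (a : L.Name) (t : Tm L) : FNa a (fr a t)
  | frT (a c : L.Name) (t : Tm L) : Tm.FNa a t → FNa a (fr c t)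
  | sim₁ (a : L.Name) (t u : Tm L) : Tm.FNa a t → FNa a (sim t u)
  | sim₂ (a : L.Name) (t u : Tm L) : Tm.FNa a u → FNa a (sim t u)
  | imp₁ (a : L.Name) (φ ψ : NFm L) : FNa a φ → FNa a (imp φ ψ)
  | imp₂ (a : L.Name) (φ ψ : NFm L) : FNa a ψ → FNa a (imp φ ψ)
  | and₁ (a : L.Name) (φ ψ : NFm L) : FNa a φ → FNa a (and φ ψ)
  | and₂ (a : L.Name) (φ ψ : NFm L) : FNa a ψ → FNa a (and φ ψ)
  | or₁ (a : L.Name) (φ ψ : NFm L) : FNa a φ → FNa a (or φ ψ)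
  | or₂ (a : L.Name) (φ ψ : NFm L) : FNa a ψ → FNa a (or φ ψ)
  | all (a : L.Name) (X : ℕ) (σ : NomSort L.NSort L.DSort) (φ : NFm L) :
      FNa a φ → FNa a (all X σ φ)
  | ex (a : L.Name) (X : ℕ) (σ : NomSort L.NSort L.DSort) (φ : NFm L) :
      FNa a φ → FNa a (ex X σ φ)
  | nu (a c : L.Name) (φ : NFm L) : a ≠ c → FNa a φ → FNa a (nu c φ)

/-- Free variables of a formula. -/
inductive FVa : ℕ → NFm L → Prop
  | atom (X : ℕ) (A : NAtom L) : NAtom.FVa X A → FVa X (atom A)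
  | eq₁ (X : ℕ) (t u : Tm L) : Tm.FVa X t → FVa X (eq t u)
  | eq₂ (X : ℕ) (t u : Tm L) : Tm.FVa X u → FVa X (eq t u)
  | frT (X : ℕ) (c : L.Name) (t : Tm L) : Tm.FVa X t → FVa X (fr c t)
  | sim₁ (X : ℕ) (t u : Tm L) : Tm.FVa X t → FVa X (sim t u)
  | sim₂ (X : ℕ) (t u : Tm L) : Tm.FVa X u → FVa X (sim t u)
  | imp₁ (X : ℕ) (φ ψ : NFm L) : FVa X φ → FVa X (imp φ ψ)
  | imp₂ (X : ℕ) (φ ψ : NFm L) : FVa X ψ → FVa X (imp φ ψ)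
  | and₁ (X : ℕ) (φ ψ : NFm L) : FVa X φ → FVa X (and φ ψ)
  | and₂ (X : ℕ) (φ ψ : NFm L) : FVa X ψ → FVa X (and φ ψ)
  | or₁ (X : ℕ) (φ ψ : NFm L) : FVa X φ → FVa X (or φ ψ)
  | or₂ (X : ℕ) (φ ψ : NFm L) : FVa X ψ → FVa X (or φ ψ)
  | all (X X' : ℕ) (σ : NomSort L.NSort L.DSort) (φ : NFm L) :
      X ≠ X' → FVa X φ → FVa X (all X' σ φ)
  | ex (X X' : ℕ) (σ : NomSort L.NSort L.DSort) (φ : NFm L) :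
      X ≠ X' → FVa X φ → FVa X (ex X' σ φ)
  | nu (X : ℕ) (c : L.Name) (φ : NFm L) : FVa X φ → FVa X (nu c φ)

end NFm

/-- Satisfaction `S ⊨ φ` of a (closed) formula by a Herbrand interpretation. -/
def FmSat (S : Set (NAtom L)) : NFm L → Prop
  | NFm.tt => True
  | NFm.ff => False
  | NFm.atom A => A ∈ S
  | NFm.eq t u => Aeq t u
  | NFm.fr a t => Fresh a t
  | NFm.sim t u => SimTm t u
  | NFm.imp φ ψ => FmSat S φ → FmSat S ψ
  | NFm.and φ ψ => FmSat S φ ∧ FmSat S ψ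
  | NFm.or φ ψ => FmSat S φ ∨ FmSat S ψ
  | NFm.all X σ φ => ∀ t : Tm L, IsTm t σ → FmSat S (φ.subst (substSingle X t))
  | NFm.ex X σ φ => ∃ t : Tm L, IsTm t σ ∧ FmSat S (φ.subst (substSingle X t))
  | NFm.nu a φ => ∀ b : L.Name, b.1 = a.1 → ¬ NFm.FNa b (NFm.nu a φ) →
      FmSat S (φ.swap b a)
termination_by φ => φ.size
decreasing_by all_goals (simp [NFm.size]; try omega)
/-! ### Herbrand models and the one-step deduction operator -/

/-- A Herbrand model of a set of (closed) program clauses: an equivariant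
subset of the Herbrand base satisfying every clause. -/
def IsHModel (Δ : Set (NCl L)) (H : Set (NAtom L)) : Prop :=
  H ⊆ BL L ∧ EquivariantSet H ∧ ∀ D ∈ Δ, ClSat H D

/-- The one-step deduction operator `T_D`. -/
def TOp : NCl L → Set (NAtom L) → Set (NAtom L)
  | NCl.tt, S => S
  | NCl.atom A, S => S ∪ {A}
  | NCl.and D D', S => TOp D S ∪ TOp D' S
  | NCl.imp G D, S => if GoalSat S G then TOp D S else S
  | NCl.all X σ D, S => ⋃ (t : Tm L) (_ : IsTm t σ), TOp (D.subst (substSingle X t)) S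
  | NCl.nu a D, S =>
      ⋃ (b : L.Name) (_ : b.1 = a.1 ∧ ¬ NCl.FNa b (NCl.nu a D)), TOp (D.swap a b) S
termination_by D _ => D.size
decreasing_by all_goals (simp [NCl.size]; try omega)

/-- The one-step deduction operator `T_Δ` of a (nonempty) program
`Δ = {D₁,…,Dₙ}`, i.e. `T_{D₁ ∧ ⋯ ∧ Dₙ}`. -/
def TProg (Δ : Set (NCl L)) (S : Set (NAtom L)) : Set (NAtom L) :=
  ⋃ D ∈ Δ, TOp D S

/-! ### Contexts, substitutions and constraint entailment -/

/-- Context bindings: variable bindings `X:σ` and name bindings `#a:ν`. -/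
inductive CtxBind (L : NomSig) : Type
  | v (X : ℕ) (σ : NomSort L.NSort L.DSort) : CtxBind L
  | n (a : L.Name) : CtxBind L

/-- Contexts, as lists of bindings with the *most recent binding first*. -/
abbrev Ctxx (L : NomSig) : Type := List (CtxBind L)

/-- The variables declared in a context. -/
def ctxVars : Ctxx L → Set ℕ
  | [] => ∅
  | CtxBind.v X _ :: Ξ => insert X (ctxVars Ξ)
  | CtxBind.n _ :: Ξ => ctxVars Ξ

/-- The names declared in a context. -/
def ctxNames : Ctxx L → Set L.Name
  | [] => ∅
  | CtxBind.v _ _ :: Ξ => ctxNames Ξ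
  | CtxBind.n a :: Ξ => insert a (ctxNames Ξ)

def CtxBind.key : CtxBind L → ℕ ⊕ L.Name
  | v X _ => Sum.inl X
  | n a => Sum.inr a

/-- All bindings of a context are distinct. -/
def CtxWF (Ξ : Ctxx L) : Prop := Ξ.Pairwise (fun b c => b.key ≠ c.key)

/-- `θ : Σ`: the ground substitution `θ` satisfies the context `Σ`. -/
def SubstOk : Ctxx L → (ℕ → Tm L) → Prop
  | [], _ => True
  | CtxBind.v X σ :: Ξ, θ => IsTm (θ X) σ ∧ SubstOk Ξ θ
  | CtxBind.n a :: Ξ, θ => (∀ X ∈ ctxVars Ξ, Fresh a (θ X)) ∧ SubstOk Ξ θ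

/-- `θ` satisfies every constraint in `∇`. -/
def SatAll (θ : ℕ → Tm L) (Φ : Finset (NCon L)) : Prop :=
  ∀ C ∈ Φ, ConSat (C.subst θ)

/-- Constraint entailment `Σ;∇ ⊨ C`. -/
def EntC (Ξ : Ctxx L) (Φ : Finset (NCon L)) (C : NCon L) : Prop :=
  ∀ θ : ℕ → Tm L, SubstOk Ξ θ → SatAll θ Φ → ConSat (C.subst θ)

/-- The free variables and names of a constraint are declared in `Σ`. -/
def ConDecl (Ξ : Ctxx L) (C : NCon L) : Prop :=
  (∀ X, NCon.FVa X C → X ∈ ctxVars Ξ) ∧ (∀ a, NCon.FNa a C → a ∈ ctxNames Ξ)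

/-- The free variables and names of a goal are declared in `Σ`. -/
def GoalDecl (Ξ : Ctxx L) (G : NGoal L) : Prop :=
  (∀ X, NGoal.FVa X G → X ∈ ctxVars Ξ) ∧ (∀ a, NGoal.FNa a G → a ∈ ctxNames Ξ)

/-- The free variables and names of a program clause are declared in `Σ`. -/
def ClDecl (Ξ : Ctxx L) (D : NCl L) : Prop :=
  (∀ X, NCl.FVa X D → X ∈ ctxVars Ξ) ∧ (∀ a, NCl.FNa a D → a ∈ ctxNames Ξ)

/-- The free variables and names of an atom are declared in `Σ`. -/
def AtomDecl (Ξ : Ctxx L) (A : NAtom L) : Prop :=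
  (∀ X, NAtom.FVa X A → X ∈ ctxVars Ξ) ∧ (∀ a, NAtom.FNa a A → a ∈ ctxNames Ξ)

/-! ### Uniform / focused proof search -/

mutual
/-- Uniform derivability `Σ;Δ;∇ ⟶ G`. -/
inductive UD (Δ : Set (NCl L)) : Ctxx L → Finset (NCon L) → NGoal L → Prop
  | top (Ξ : Ctxx L) (Φ : Finset (NCon L)) : UD Δ Ξ Φ NGoal.tt
  | con (Ξ : Ctxx L) (Φ : Finset (NCon L)) (C : NCon L) :
      EntC Ξ Φ C → UD Δ Ξ Φ (NGoal.con C)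
  | andR (Ξ : Ctxx L) (Φ : Finset (NCon L)) (G₁ G₂ : NGoal L) :
      UD Δ Ξ Φ G₁ → UD Δ Ξ Φ G₂ → UD Δ Ξ Φ (NGoal.and G₁ G₂)
  | orR₁ (Ξ : Ctxx L) (Φ : Finset (NCon L)) (G₁ G₂ : NGoal L) :
      UD Δ Ξ Φ G₁ → UD Δ Ξ Φ (NGoal.or G₁ G₂)
  | orR₂ (Ξ : Ctxx L) (Φ : Finset (NCon L)) (G₁ G₂ : NGoal L) :
      UD Δ Ξ Φ G₂ → UD Δ Ξ Φ (NGoal.or G₁ G₂)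
  | exR (Ξ : Ctxx L) (Φ : Finset (NCon L)) (X : ℕ) (σ : NomSort L.NSort L.DSort)
      (C : NCon L) (G : NGoal L) :
      EntC Ξ Φ (NCon.ex X σ C) → UD Δ (CtxBind.v X σ :: Ξ) (insert C Φ) G →
      UD Δ Ξ Φ (NGoal.ex X σ G)
  | nuR (Ξ : Ctxx L) (Φ : Finset (NCon L)) (a : L.Name) (C : NCon L) (G : NGoal L) :
      EntC Ξ Φ (NCon.nu a C) → UD Δ (CtxBind.n a :: Ξ) (insert C Φ) G →
      UD Δ Ξ Φ (NGoal.nu a G)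
  | sel (Ξ : Ctxx L) (Φ : Finset (NCon L)) (D : NCl L) (A : NAtom L) :
      D ∈ Δ → FD Δ Ξ Φ D A → UD Δ Ξ Φ (NGoal.atom A)

/-- Focused derivability `Σ;Δ;∇ ⟶ [D] ⇒ A`. -/
inductive FD (Δ : Set (NCl L)) : Ctxx L → Finset (NCon L) → NCl L → NAtom L → Prop
  | hyp (Ξ : Ctxx L) (Φ : Finset (NCon L)) (A' A : NAtom L) :
      EntC Ξ Φ (NCon.simA A' A) → FD Δ Ξ Φ (NCl.atom A') A
  | andL₁ (Ξ : Ctxx L) (Φ : Finset (NCon L)) (D₁ D₂ : NCl L) (A : NAtom L) :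
      FD Δ Ξ Φ D₁ A → FD Δ Ξ Φ (NCl.and D₁ D₂) A
  | andL₂ (Ξ : Ctxx L) (Φ : Finset (NCon L)) (D₁ D₂ : NCl L) (A : NAtom L) :
      FD Δ Ξ Φ D₂ A → FD Δ Ξ Φ (NCl.and D₁ D₂) A
  | impL (Ξ : Ctxx L) (Φ : Finset (NCon L)) (G : NGoal L) (D : NCl L) (A : NAtom L) :
      FD Δ Ξ Φ D A → UD Δ Ξ Φ G → FD Δ Ξ Φ (NCl.imp G D) A
  | allL (Ξ : Ctxx L) (Φ : Finset (NCon L)) (X : ℕ) (σ : NomSort L.NSort L.DSort)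
      (C : NCon L) (D : NCl L) (A : NAtom L) :
      EntC Ξ Φ (NCon.ex X σ C) → FD Δ (CtxBind.v X σ :: Ξ) (insert C Φ) D A →
      FD Δ Ξ Φ (NCl.all X σ D) A
  | nuL (Ξ : Ctxx L) (Φ : Finset (NCon L)) (a : L.Name) (C : NCon L) (D : NCl L)
      (A : NAtom L) :
      EntC Ξ Φ (NCon.nu a C) → FD Δ (CtxBind.n a :: Ξ) (insert C Φ) D A →
      FD Δ Ξ Φ (NCl.nu a D) A
end

mutual
/-- Uniform derivability for ≈-resolution, `Σ;Δ;∇ ⟶≈ G`. -/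
inductive UDe (Δ : Set (NCl L)) : Ctxx L → Finset (NCon L) → NGoal L → Prop
  | top (Ξ : Ctxx L) (Φ : Finset (NCon L)) : UDe Δ Ξ Φ NGoal.tt
  | con (Ξ : Ctxx L) (Φ : Finset (NCon L)) (C : NCon L) :
      EntC Ξ Φ C → UDe Δ Ξ Φ (NGoal.con C)
  | andR (Ξ : Ctxx L) (Φ : Finset (NCon L)) (G₁ G₂ : NGoal L) :
      UDe Δ Ξ Φ G₁ → UDe Δ Ξ Φ G₂ → UDe Δ Ξ Φ (NGoal.and G₁ G₂)
  | orR₁ (Ξ : Ctxx L) (Φ : Finset (NCon L)) (G₁ G₂ : NGoal L) :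
      UDe Δ Ξ Φ G₁ → UDe Δ Ξ Φ (NGoal.or G₁ G₂)
  | orR₂ (Ξ : Ctxx L) (Φ : Finset (NCon L)) (G₁ G₂ : NGoal L) :
      UDe Δ Ξ Φ G₂ → UDe Δ Ξ Φ (NGoal.or G₁ G₂)
  | exR (Ξ : Ctxx L) (Φ : Finset (NCon L)) (X : ℕ) (σ : NomSort L.NSort L.DSort)
      (C : NCon L) (G : NGoal L) :
      EntC Ξ Φ (NCon.ex X σ C) → UDe Δ (CtxBind.v X σ :: Ξ) (insert C Φ) G →
      UDe Δ Ξ Φ (NGoal.ex X σ G)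
  | nuR (Ξ : Ctxx L) (Φ : Finset (NCon L)) (a : L.Name) (C : NCon L) (G : NGoal L) :
      EntC Ξ Φ (NCon.nu a C) → UDe Δ (CtxBind.n a :: Ξ) (insert C Φ) G →
      UDe Δ Ξ Φ (NGoal.nu a G)
  | sel (Ξ : Ctxx L) (Φ : Finset (NCon L)) (D : NCl L) (A : NAtom L) :
      D ∈ Δ → FDe Δ Ξ Φ D A → UDe Δ Ξ Φ (NGoal.atom A)

/-- Focused derivability for ≈-resolution, `Σ;Δ;∇ ⟶≈ [D] ⇒ A`. -/
inductive FDe (Δ : Set (NCl L)) : Ctxx L → Finset (NCon L) → NCl L → NAtom L → Prop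
  | hyp (Ξ : Ctxx L) (Φ : Finset (NCon L)) (A' A : NAtom L) :
      EntC Ξ Φ (NCon.aeqA A' A) → FDe Δ Ξ Φ (NCl.atom A') A
  | andL₁ (Ξ : Ctxx L) (Φ : Finset (NCon L)) (D₁ D₂ : NCl L) (A : NAtom L) :
      FDe Δ Ξ Φ D₁ A → FDe Δ Ξ Φ (NCl.and D₁ D₂) A
  | andL₂ (Ξ : Ctxx L) (Φ : Finset (NCon L)) (D₁ D₂ : NCl L) (A : NAtom L) :
      FDe Δ Ξ Φ D₂ A → FDe Δ Ξ Φ (NCl.and D₁ D₂) A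
  | impL (Ξ : Ctxx L) (Φ : Finset (NCon L)) (G : NGoal L) (D : NCl L) (A : NAtom L) :
      FDe Δ Ξ Φ D A → UDe Δ Ξ Φ G → FDe Δ Ξ Φ (NCl.imp G D) A
  | allL (Ξ : Ctxx L) (Φ : Finset (NCon L)) (X : ℕ) (σ : NomSort L.NSort L.DSort)
      (C : NCon L) (D : NCl L) (A : NAtom L) :
      EntC Ξ Φ (NCon.ex X σ C) → FDe Δ (CtxBind.v X σ :: Ξ) (insert C Φ) D A →
      FDe Δ Ξ Φ (NCl.all X σ D) A
  | nuL (Ξ : Ctxx L) (Φ : Finset (NCon L)) (a : L.Name) (C : NCon L) (D : NCl L)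
      (A : NAtom L) :
      EntC Ξ Φ (NCon.nu a C) → FDe Δ (CtxBind.n a :: Ξ) (insert C Φ) D A →
      FDe Δ Ξ Φ (NCl.nu a D) A
end

/-! ### Residuated proof search -/

mutual
/-- Residuated uniform derivability `Σ;Δ ⟶ G ↘ C`. -/
inductive RG (Δ : Set (NCl L)) : Ctxx L → NGoal L → NCon L → Prop
  | con (Ξ : Ctxx L) (C : NCon L) : RG Δ Ξ (NGoal.con C) C
  | top (Ξ : Ctxx L) : RG Δ Ξ NGoal.tt NCon.tt
  | andR (Ξ : Ctxx L) (G₁ G₂ : NGoal L) (C₁ C₂ : NCon L) :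
      RG Δ Ξ G₁ C₁ → RG Δ Ξ G₂ C₂ → RG Δ Ξ (NGoal.and G₁ G₂) (NCon.and C₁ C₂)
  | orR₁ (Ξ : Ctxx L) (G₁ G₂ : NGoal L) (C : NCon L) :
      RG Δ Ξ G₁ C → RG Δ Ξ (NGoal.or G₁ G₂) C
  | orR₂ (Ξ : Ctxx L) (G₁ G₂ : NGoal L) (C : NCon L) :
      RG Δ Ξ G₂ C → RG Δ Ξ (NGoal.or G₁ G₂) C
  | exR (Ξ : Ctxx L) (X : ℕ) (σ : NomSort L.NSort L.DSort) (G : NGoal L) (C : NCon L) :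
      RG Δ (CtxBind.v X σ :: Ξ) G C → RG Δ Ξ (NGoal.ex X σ G) (NCon.ex X σ C)
  | nuR (Ξ : Ctxx L) (a : L.Name) (G : NGoal L) (C : NCon L) :
      RG Δ (CtxBind.n a :: Ξ) G C → RG Δ Ξ (NGoal.nu a G) (NCon.nu a C)
  | back (Ξ : Ctxx L) (A : NAtom L) (D : NCl L) (G : NGoal L) (C : NCon L) :
      D ∈ Δ → RF Δ Ξ D A G → RG Δ Ξ G C → RG Δ Ξ (NGoal.atom A) C

/-- Residuated focused derivability `Σ;Δ ⟶ [D] ⇒ A ↘ G`. -/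
inductive RF (Δ : Set (NCl L)) : Ctxx L → NCl L → NAtom L → NGoal L → Prop
  | hyp (Ξ : Ctxx L) (A' A : NAtom L) :
      RF Δ Ξ (NCl.atom A') A (NGoal.con (NCon.simA A A'))
  | andL₁ (Ξ : Ctxx L) (D₁ D₂ : NCl L) (A : NAtom L) (G : NGoal L) :
      RF Δ Ξ D₁ A G → RF Δ Ξ (NCl.and D₁ D₂) A G
  | andL₂ (Ξ : Ctxx L) (D₁ D₂ : NCl L) (A : NAtom L) (G : NGoal L) :
      RF Δ Ξ D₂ A G → RF Δ Ξ (NCl.and D₁ D₂) A G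
  | impL (Ξ : Ctxx L) (G : NGoal L) (D : NCl L) (A : NAtom L) (G' : NGoal L) :
      RF Δ Ξ D A G' → RF Δ Ξ (NCl.imp G D) A (NGoal.and G G')
  | allL (Ξ : Ctxx L) (X : ℕ) (σ : NomSort L.NSort L.DSort) (D : NCl L) (A : NAtom L)
      (G : NGoal L) :
      RF Δ (CtxBind.v X σ :: Ξ) D A G → RF Δ Ξ (NCl.all X σ D) A (NGoal.ex X σ G)
  | nuL (Ξ : Ctxx L) (a : L.Name) (D : NCl L) (A : NAtom L) (G : NGoal L) :
      RF Δ (CtxBind.n a :: Ξ) D A G → RF Δ Ξ (NCl.nu a D) A (NGoal.nu a G)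
end

/-! ### Operational semantics -/

/-- Operational states `⟨Σ; Γ; ∇⟩`. -/
structure OState (L : NomSig) : Type where
  ctx : Ctxx L
  goals : List (NGoal L)
  cons : Finset (NCon L)

/-- The operational transition relation relative to a program `Δ`. -/
inductive OStep (Δ : Set (NCl L)) : OState L → OState L → Prop
  | back (Ξ : Ctxx L) (Φ : Finset (NCon L)) (Γ : List (NGoal L)) (D : NCl L)
      (A : NAtom L) (G : NGoal L) :
      D ∈ Δ → RF Δ Ξ D A G →
      OStep Δ ⟨Ξ, NGoal.atom A :: Γ, Φ⟩ ⟨Ξ, G :: Γ, Φ⟩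
  | con (Ξ : Ctxx L) (Φ : Finset (NCon L)) (Γ : List (NGoal L)) (C : NCon L) :
      (∃ θ : ℕ → Tm L, SubstOk Ξ θ ∧ SatAll θ (insert C Φ)) →
      OStep Δ ⟨Ξ, NGoal.con C :: Γ, Φ⟩ ⟨Ξ, Γ, insert C Φ⟩
  | top (Ξ : Ctxx L) (Φ : Finset (NCon L)) (Γ : List (NGoal L)) :
      OStep Δ ⟨Ξ, NGoal.tt :: Γ, Φ⟩ ⟨Ξ, Γ, Φ⟩
  | and (Ξ : Ctxx L) (Φ : Finset (NCon L)) (Γ : List (NGoal L)) (G₁ G₂ : NGoal L) :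
      OStep Δ ⟨Ξ, NGoal.and G₁ G₂ :: Γ, Φ⟩ ⟨Ξ, G₁ :: G₂ :: Γ, Φ⟩
  | or₁ (Ξ : Ctxx L) (Φ : Finset (NCon L)) (Γ : List (NGoal L)) (G₁ G₂ : NGoal L) :
      OStep Δ ⟨Ξ, NGoal.or G₁ G₂ :: Γ, Φ⟩ ⟨Ξ, G₁ :: Γ, Φ⟩
  | or₂ (Ξ : Ctxx L) (Φ : Finset (NCon L)) (Γ : List (NGoal L)) (G₁ G₂ : NGoal L) :
      OStep Δ ⟨Ξ, NGoal.or G₁ G₂ :: Γ, Φ⟩ ⟨Ξ, G₂ :: Γ, Φ⟩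
  | ex (Ξ : Ctxx L) (Φ : Finset (NCon L)) (Γ : List (NGoal L)) (X : ℕ)
      (σ : NomSort L.NSort L.DSort) (G : NGoal L) :
      OStep Δ ⟨Ξ, NGoal.ex X σ G :: Γ, Φ⟩ ⟨CtxBind.v X σ :: Ξ, G :: Γ, Φ⟩
  | nu (Ξ : Ctxx L) (Φ : Finset (NCon L)) (Γ : List (NGoal L)) (a : L.Name)
      (G : NGoal L) :
      OStep Δ ⟨Ξ, NGoal.nu a G :: Γ, Φ⟩ ⟨CtxBind.n a :: Ξ, G :: Γ, Φ⟩

/-- `∃Σ[C]`: close a constraint by quantifying over all bindings of a context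
(innermost quantifier for the most recent binding). -/
def exCtx : Ctxx L → NCon L → NCon L
  | [], C => C
  | CtxBind.v X σ :: Ξ, C => exCtx Ξ (NCon.ex X σ C)
  | CtxBind.n a :: Ξ, C => exCtx Ξ (NCon.nu a C)

/-- The conjunction of a finite set of constraints. -/
def bigAnd (Φ : Finset (NCon L)) : NCon L := Φ.toList.foldr NCon.and NCon.tt

/-! ### Ground terms, renaming and substitution -/

theorem Tm.ind {P : Tm L → Prop} (hv : ∀ X, P (Tm.var X)) (hn : ∀ a, P (Tm.name a))
    (ha : ∀ g ts, (∀ t ∈ ts, P t) → P (Tm.app g ts))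
    (hb : ∀ a t, P t → P (Tm.abs a t)) : ∀ t, P t
  | Tm.var X => hv X
  | Tm.name a => hn a
  | Tm.app g ts => ha g ts fun t ht => Tm.ind hv hn ha hb t
  | Tm.abs a t => hb a t (Tm.ind hv hn ha hb t)
termination_by t => sizeOf t
decreasing_by
  all_goals simp_wf
  have := List.sizeOf_lt_of_mem ht
  omega

@[simp] theorem rename_var (f : L.Name → L.Name) (X : ℕ) :
    (Tm.var X).rename f = Tm.var X := by rw [Tm.rename]

@[simp] theorem rename_name (f : L.Name → L.Name) (a : L.Name) :
    (Tm.name a).rename f = Tm.name (f a) := by rw [Tm.rename]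

@[simp] theorem rename_app (f : L.Name → L.Name) (g : L.Func) (ts : List (Tm L)) :
    (Tm.app g ts).rename f = Tm.app g (ts.map (Tm.rename f)) := by
  rw [Tm.rename]; simp

@[simp] theorem rename_abs (f : L.Name → L.Name) (a : L.Name) (t : Tm L) :
    (Tm.abs a t).rename f = Tm.abs (f a) (t.rename f) := by rw [Tm.rename]

@[simp] theorem subst_var (θ : ℕ → Tm L) (X : ℕ) : (Tm.var X).subst θ = θ X := by
  rw [Tm.subst]

@[simp] theorem subst_name (θ : ℕ → Tm L) (a : L.Name) :
    (Tm.name a).subst θ = Tm.name a := by rw [Tm.subst]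

@[simp] theorem subst_app (θ : ℕ → Tm L) (g : L.Func) (ts : List (Tm L)) :
    (Tm.app g ts).subst θ = Tm.app g (ts.map (Tm.subst θ)) := by
  rw [Tm.subst]; simp

@[simp] theorem subst_abs (θ : ℕ → Tm L) (a : L.Name) (t : Tm L) :
    (Tm.abs a t).subst θ = Tm.abs a (t.subst θ) := by rw [Tm.subst]

/-- A term without variables, not necessarily well-sorted. -/
def VarFree (t : Tm L) : Prop := ∀ X, ¬ Tm.FVa X t

theorem varFree_app {g : L.Func} {ts : List (Tm L)} :
    VarFree (Tm.app g ts) ↔ ∀ t ∈ ts, VarFree t := by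
  constructor
  · intro h t ht X hX
    exact h X (.app _ _ _ _ ht hX)
  · intro h X hX
    cases hX with
    | app _ _ t ht hX => exact h t ht X hX

theorem varFree_abs {a : L.Name} {t : Tm L} : VarFree (Tm.abs a t) ↔ VarFree t := by
  constructor
  · intro h X hX
    exact h X (.abs _ _ _ hX)
  · intro h X hX
    cases hX with
    | abs _ _ hX => exact h X hX

theorem exists_mem_zip {α β : Type} {l₁ : List α} {l₂ : List β}
    (h : l₁.length = l₂.length) {x : α} (hx : x ∈ l₁) : ∃ y, (x, y) ∈ l₁.zip l₂ := by
  obtain ⟨n, hn, rfl⟩ := List.getElem_of_mem hx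
  refine ⟨l₂[n], ?_⟩
  rw [← List.getElem_zip (h := by simp; omega)]
  exact List.getElem_mem _

theorem IsTm.varFree {t : Tm L} {σ : NomSort L.NSort L.DSort} (h : IsTm t σ) :
    VarFree t := by
  induction h with
  | name a => intro X hX; cases hX
  | app f ts hl _ ih =>
    refine varFree_app.2 fun t ht => ?_
    obtain ⟨y, hy⟩ := exists_mem_zip hl ht
    exact ih _ hy
  | abs a t σ _ ih => exact varFree_abs.2 ih

theorem Aeq.varFree_left {t u : Tm L} (h : Aeq t u) : VarFree t := by
  induction h with
  | name a => intro X hX; cases hX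
  | app f ts us hl _ ih =>
    refine varFree_app.2 fun t ht => ?_
    obtain ⟨y, hy⟩ := exists_mem_zip hl ht
    exact ih _ hy
  | absSame a t u _ ih => exact varFree_abs.2 ih
  | absDiff a b t u _ _ ih => exact varFree_abs.2 ih

theorem IsTm.sort_unique {t : Tm L} {σ τ : NomSort L.NSort L.DSort} (h : IsTm t σ)
    (h' : IsTm t τ) : σ = τ := by
  induction h generalizing τ with
  | name a => cases h'; rfl
  | app f ts _ _ _ => cases h'; rfl
  | abs a t σ _ ih =>
    cases h' with
    | abs _ _ σ' h' => rw [ih h']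

theorem rename_id (t : Tm L) : t.rename id = t := by
  induction t using Tm.ind with
  | hv X => simp
  | hn a => simp
  | ha g ts ih => rw [rename_app, List.map_congr_left (g := id) ih, List.map_id]
  | hb a t ih => simp [ih]

theorem rename_rename (f g : L.Name → L.Name) (t : Tm L) :
    (t.rename g).rename f = t.rename (f ∘ g) := by
  induction t using Tm.ind with
  | hv X => simp
  | hn a => simp
  | ha g ts ih => simpa using ih
  | hb a t ih => simp [ih]

theorem rename_subst (f : L.Name → L.Name) (θ : ℕ → Tm L) (t : Tm L) :
    (t.subst θ).rename f = (t.rename f).subst (fun X => (θ X).rename f) := by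
  induction t using Tm.ind with
  | hv X => simp
  | hn a => simp
  | ha g ts ih => simpa using ih
  | hb a t ih => simp [ih]

/-- `SubstComp θ₁ θ₂ θ₃ X`: at `X`, substituting first `θ₁` and then `θ₂` agrees with `θ₃`
for a reason stable under binders: `θ₁` either leaves `X` alone or makes it variable-free. -/
def SubstComp (θ₁ θ₂ θ₃ : ℕ → Tm L) (X : ℕ) : Prop :=
  (θ₁ X = Tm.var X ∧ θ₃ X = θ₂ X) ∨ (VarFree (θ₁ X) ∧ θ₃ X = θ₁ X)

theorem SubstComp.update {θ₁ θ₂ θ₃ : ℕ → Tm L} {X Z : ℕ}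
    (h : X ≠ Z → SubstComp θ₁ θ₂ θ₃ X) :
    SubstComp (Function.update θ₁ Z (Tm.var Z)) (Function.update θ₂ Z (Tm.var Z))
      (Function.update θ₃ Z (Tm.var Z)) X := by
  by_cases hX : X = Z
  · subst hX; left; simp
  · simpa [SubstComp, hX] using h hX

theorem subst_eq_self {θ : ℕ → Tm L} {t : Tm L} (h : ∀ X, Tm.FVa X t → θ X = Tm.var X) :
    t.subst θ = t := by
  induction t using Tm.ind with
  | hv X => simpa using h X (.var X)
  | hn a => simp
  | ha g ts ih =>
    rw [subst_app, List.map_congr_left (g := id)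
      fun t ht => ih t ht fun X hX => h X (.app _ _ _ _ ht hX), List.map_id]
  | hb a t ih => simpa using ih fun X hX => h X (.abs _ _ _ hX)

theorem VarFree.subst {t : Tm L} (h : VarFree t) (θ : ℕ → Tm L) : t.subst θ = t :=
  subst_eq_self fun X hX => (h X hX).elim

theorem subst_comp {θ₁ θ₂ θ₃ : ℕ → Tm L} {t : Tm L}
    (h : ∀ X, Tm.FVa X t → SubstComp θ₁ θ₂ θ₃ X) :
    (t.subst θ₁).subst θ₂ = t.subst θ₃ := by
  induction t using Tm.ind with
  | hv X =>
    rcases h X (.var X) with ⟨h1, h2⟩ | ⟨h1, h2⟩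
    · simp [h1, h2]
    · simp [h2, h1.subst]
  | hn a => simp
  | ha g ts ih =>
    simp only [subst_app, List.map_map, Tm.app.injEq, true_and]
    exact List.map_congr_left fun t ht => ih t ht fun X hX => h X (.app _ _ _ _ ht hX)
  | hb a t ih => simpa using ih fun X hX => h X (.abs _ _ _ hX)

theorem varFree_subst {θ : ℕ → Tm L} {t : Tm L} (h : ∀ X, Tm.FVa X t → VarFree (θ X)) :
    VarFree (t.subst θ) := by
  induction t using Tm.ind with
  | hv X => simpa using h X (.var X)
  | hn a => intro X hX; simp at hX; cases hX
  | ha g ts ih =>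
    simp only [subst_app, varFree_app, List.mem_map]
    rintro _ ⟨t, ht, rfl⟩
    exact ih t ht fun X hX => h X (.app _ _ _ _ ht hX)
  | hb a t ih => simpa [varFree_abs] using ih fun X hX => h X (.abs _ _ _ hX)

/-! ### Permutations, freshness and alpha-equivalence -/

theorem IsPerm.id : IsPerm (id : L.Name → L.Name) :=
  ⟨Function.bijective_id, fun _ => rfl, by simp⟩

theorem IsPerm.comp {π ρ : L.Name → L.Name} (hπ : IsPerm π) (hρ : IsPerm ρ) :
    IsPerm (π ∘ ρ) := by
  refine ⟨hπ.1.comp hρ.1, fun a => by simp [hπ.2.1, hρ.2.1], ?_⟩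
  refine (hπ.2.2.union hρ.2.2).subset fun a ha => ?_
  by_contra hn
  simp only [Set.mem_union, Set.mem_ofPred_eq, not_or, not_not] at hn
  exact ha (by simp [hn.1, hn.2])

theorem IsPerm.exists_inv {π : L.Name → L.Name} (hπ : IsPerm π) :
    ∃ ρ, IsPerm ρ ∧ π ∘ ρ = _root_.id ∧ ρ ∘ π = _root_.id := by
  obtain ⟨ρ, hl, hr⟩ := Function.bijective_iff_has_inverse.1 hπ.1
  refine ⟨ρ, ⟨⟨hr.injective, hl.surjective⟩, fun a => ?_, ?_⟩, hr.comp_eq_id, hl.comp_eq_id⟩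
  · rw [← hπ.2.1, hr a]
  · refine hπ.2.2.subset fun a ha h => ha ?_
    rw [← h, hl a, h]

theorem swapName_self (a : L.Name) : swapName a a = id := by
  funext c; simp only [swapName, id]; split_ifs <;> simp_all

theorem swapName_comm (a b : L.Name) : swapName a b = swapName b a := by
  funext c; simp only [swapName]; split_ifs <;> simp_all

theorem swapName_invol (a b : L.Name) : swapName a b ∘ swapName a b = id := by
  funext c; simp only [swapName, Function.comp, id]; split_ifs <;> simp_all

@[simp] theorem swapName_left (a b : L.Name) : swapName a b a = b := by simp [swapName]

@[simp] theorem swapName_right (a b : L.Name) : swapName a b b = a := by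
  simp only [swapName]; split_ifs <;> simp_all

theorem swapName_other {a b c : L.Name} (h : c ≠ a) (h' : c ≠ b) : swapName a b c = c := by
  simp [swapName, h, h']

theorem swapName_injective (a b : L.Name) : Function.Injective (swapName a b) :=
  Function.LeftInverse.injective (g := swapName a b)
    fun c => congrFun (swapName_invol a b) c

theorem comp_swapName {f : L.Name → L.Name} (hf : Function.Injective f) (a b : L.Name) :
    f ∘ swapName a b = swapName (f a) (f b) ∘ f := by
  funext c; simp only [swapName, Function.comp, hf.eq_iff]; split_ifs <;> rfl

theorem IsPerm.swapName {a b : L.Name} (h : a.1 = b.1) : IsPerm (swapName a b) := by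
  refine ⟨⟨swapName_injective a b, fun c => ⟨_, congrFun (swapName_invol a b) c⟩⟩, ?_, ?_⟩
  · intro c; simp only [_root_.swapName]; split_ifs <;> simp_all
  · refine (Set.toFinite {a, b}).subset fun c hc => ?_
    by_contra hn
    simp only [Set.mem_insert_iff, Set.mem_singleton_iff, not_or] at hn
    exact hc (swapName_other hn.1 hn.2)

theorem swap_swap (a b : L.Name) (t : Tm L) : (t.swap a b).swap a b = t := by
  rw [Tm.swap, Tm.swap, rename_rename, swapName_invol, rename_id]

theorem rename_swap {f : L.Name → L.Name} (hf : Function.Injective f) (a b : L.Name)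
    (t : Tm L) : (t.swap a b).rename f = (t.rename f).swap (f a) (f b) := by
  rw [Tm.swap, Tm.swap, rename_rename, rename_rename, comp_swapName hf]

theorem IsTm.rename {π : L.Name → L.Name} (hπ : IsPerm π) {t : Tm L}
    {σ : NomSort L.NSort L.DSort} (h : IsTm t σ) : IsTm (t.rename π) σ := by
  induction h with
  | name a => rw [rename_name, ← hπ.2.1 a]; exact .name _
  | app f ts hl _ ih =>
    rw [rename_app]
    refine .app _ _ (by simpa using hl) fun p hp => ?_
    rw [List.zip_map_left, List.mem_map] at hp
    obtain ⟨q, hq, rfl⟩ := hp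
    exact ih q hq
  | abs a t σ _ ih => rw [rename_abs, ← hπ.2.1 a]; exact .abs _ _ _ ih

theorem Fresh.rename {f : L.Name → L.Name} (hf : Function.Injective f) {a : L.Name}
    {t : Tm L} (h : Fresh a t) : Fresh (f a) (t.rename f) := by
  induction h with
  | name b hab => rw [rename_name]; exact .name _ _ (hf.ne hab)
  | app g ts _ ih =>
    rw [rename_app]
    refine .app _ _ _ fun t ht => ?_
    obtain ⟨u, hu, rfl⟩ := List.mem_map.1 ht
    exact ih u hu
  | absSame t => rw [rename_abs]; exact .absSame _ _
  | absDiff b t hab _ ih => rw [rename_abs]; exact .absDiff _ _ _ (hf.ne hab) ih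

theorem Fresh.swap {a b c : L.Name} {t : Tm L} (h : Fresh c t) :
    Fresh (swapName a b c) (t.swap a b) := h.rename (swapName_injective a b)

theorem Fresh.of_swap {a b c : L.Name} {t : Tm L} (h : Fresh c (t.swap a b)) :
    Fresh (swapName a b c) t := by
  have := h.swap (a := a) (b := b)
  rwa [swap_swap] at this

theorem Aeq.rename {f : L.Name → L.Name} (hf : Function.Injective f) {t u : Tm L}
    (h : Aeq t u) : Aeq (t.rename f) (u.rename f) := by
  induction h with
  | name a => rw [rename_name]; exact .name _
  | app g ts us hl _ ih =>
    rw [rename_app, rename_app]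
    refine .app _ _ _ (by simpa using hl) fun p hp => ?_
    rw [List.zip_map, List.mem_map] at hp
    obtain ⟨q, hq, rfl⟩ := hp
    exact ih q hq
  | absSame a t u _ ih => rw [rename_abs, rename_abs]; exact .absSame _ _ _ ih
  | absDiff a b t u hfr _ ih =>
    rw [rename_abs, rename_abs]
    rw [rename_swap hf] at ih
    exact .absDiff _ _ _ _ (hfr.rename hf) ih

theorem mem_zip_symm {α β : Type} {l₁ : List α} {l₂ : List β} {p : β × α}
    (h : p ∈ l₂.zip l₁) : p.swap ∈ l₁.zip l₂ := by
  rw [← List.zip_swap, List.mem_map]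
  exact ⟨p, h, rfl⟩

theorem fresh_abs {a c : L.Name} {t : Tm L} :
    Fresh c (Tm.abs a t) ↔ c = a ∨ Fresh c t := by
  constructor
  · intro h
    cases h with
    | absSame => exact .inl rfl
    | absDiff _ _ _ h => exact .inr h
  · intro h
    by_cases hc : c = a
    · subst hc; exact .absSame _ _
    · exact .absDiff _ _ _ hc (h.resolve_left hc)

theorem fresh_app {c : L.Name} {g : L.Func} {ts : List (Tm L)} :
    Fresh c (Tm.app g ts) ↔ ∀ t ∈ ts, Fresh c t :=
  ⟨fun h => by cases h with | app _ _ h => exact h, .app _ _ _⟩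

theorem Aeq.fresh_iff {t u : Tm L} (h : Aeq t u) (c : L.Name) :
    Fresh c t ↔ Fresh c u := by
  induction h generalizing c with
  | name a => rfl
  | app g ts us hl _ ih =>
    rw [fresh_app, fresh_app]
    constructor
    · intro h u hu
      obtain ⟨t, ht⟩ := exists_mem_zip hl.symm hu
      have ht := mem_zip_symm ht
      exact (ih _ ht c).1 (h _ (List.of_mem_zip ht).1)
    · intro h t ht
      obtain ⟨u, hu⟩ := exists_mem_zip hl ht
      exact (ih _ hu c).2 (h _ (List.of_mem_zip hu).2)
  | absSame a t u _ ih => rw [fresh_abs, fresh_abs, ih]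
  | absDiff a b t u hfr _ ih =>
    rw [fresh_abs, fresh_abs, ih]
    by_cases hca : c = a
    · subst hca; simp [hfr]
    by_cases hcb : c = b
    · subst hcb
      have := hfr.swap (a := a) (b := c)
      simp_all
    · have hc := swapName_other hca hcb
      simp only [hca, hcb, false_or]
      exact ⟨fun h => hc ▸ h.of_swap, fun h => by simpa only [hc] using h.swap (a := a) (b := b)⟩

theorem Aeq.symm {t u : Tm L} (h : Aeq t u) : Aeq u t := by
  induction h with
  | name a => exact .name a
  | app g ts us hl _ ih => exact .app _ _ _ hl.symm fun p hp => ih _ (mem_zip_symm hp)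
  | absSame a t u _ ih => exact .absSame _ _ _ ih
  | absDiff a b t u hfr h ih =>
    refine .absDiff _ _ _ _ ((h.fresh_iff b).2 ?_) ?_
    · simpa using hfr.swap (a := a) (b := b)
    · have := ih.rename (swapName_injective a b)
      change Aeq ((u.swap a b).swap a b) (t.swap a b) at this
      rw [swap_swap] at this
      rwa [Tm.swap, swapName_comm]

theorem mem_zip_self {α : Type} {l : List α} {p : α × α} (h : p ∈ l.zip l) :
    p.1 ∈ l ∧ p.1 = p.2 := by
  induction l with
  | nil => simp at h
  | cons x l ih =>
    rw [List.zip_cons_cons, List.mem_cons] at h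
    rcases h with rfl | h
    · simp
    · exact ⟨List.mem_cons_of_mem _ (ih h).1, (ih h).2⟩

theorem VarFree.aeq_refl {t : Tm L} (h : VarFree t) : Aeq t t := by
  induction t using Tm.ind with
  | hv X => exact (h X (.var X)).elim
  | hn a => exact .name a
  | ha g ts ih =>
    refine .app _ _ _ rfl fun p hp => ?_
    obtain ⟨h1, h2⟩ := mem_zip_self hp
    rw [← h2]
    exact ih _ h1 (varFree_app.1 h _ h1)
  | hb a t ih => exact .absSame _ _ _ (ih (varFree_abs.1 h))

theorem VarFree.rename {t : Tm L} (h : VarFree t) (f : L.Name → L.Name) :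
    VarFree (t.rename f) := by
  induction t using Tm.ind with
  | hv X => exact (h X (.var X)).elim
  | hn a => intro X hX; simp at hX; cases hX
  | ha g ts ih =>
    simp only [rename_app, varFree_app, List.mem_map]
    rintro _ ⟨t, ht, rfl⟩
    exact ih t ht (varFree_app.1 h t ht)
  | hb a t ih => rw [rename_abs, varFree_abs]; exact ih (varFree_abs.1 h)

theorem swap_aeq_of_fresh {a b : L.Name} {t : Tm L} (hv : VarFree t) (ha : Fresh a t)
    (hb : Fresh b t) : Aeq (t.swap a b) t := by
  induction t using Tm.ind with
  | hv X => cases ha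
  | hn c =>
    cases ha with
    | name _ ha =>
    cases hb with
    | name _ hb =>
    rw [Tm.swap, rename_name, swapName_other ha.symm hb.symm]
    exact .name c
  | ha g ts ih =>
    rw [Tm.swap, rename_app]
    refine .app _ _ _ (by simp) fun p hp => ?_
    rw [List.zip_map_left, List.mem_map] at hp
    obtain ⟨q, hq, rfl⟩ := hp
    obtain ⟨h1, h2⟩ := mem_zip_self hq
    have := ih _ h1 (varFree_app.1 hv _ h1) (fresh_app.1 ha _ h1) (fresh_app.1 hb _ h1)
    simpa [← h2, Tm.swap] using this
  | hb c t ih =>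
    have hvt := varFree_abs.1 hv
    rw [Tm.swap, rename_abs]
    by_cases hab : a = b
    · subst hab
      rw [swapName_self, rename_id]
      exact hv.aeq_refl
    by_cases hca : c = a
    · subst hca
      rw [swapName_left, swapName_comm]
      exact .absDiff _ _ _ _ ((fresh_abs.1 hb).resolve_left (Ne.symm hab))
        (hvt.rename _).aeq_refl
    by_cases hcb : c = b
    · subst hcb
      rw [swapName_right]
      exact .absDiff _ _ _ _ ((fresh_abs.1 ha).resolve_left hab) (hvt.rename _).aeq_refl
    · rw [swapName_other hca hcb]
      exact .absSame _ _ _ (ih hvt ((fresh_abs.1 ha).resolve_left (Ne.symm hca))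
        ((fresh_abs.1 hb).resolve_left (Ne.symm hcb)))

theorem aeq_zip_trans {ts us vs : List (Tm L)}
    (ih : ∀ t ∈ ts, ∀ u v, Aeq t u → Aeq u v → Aeq t v)
    (h1 : ts.length = us.length) (h1' : ∀ p ∈ ts.zip us, Aeq p.1 p.2)
    (h2 : us.length = vs.length) (h2' : ∀ p ∈ us.zip vs, Aeq p.1 p.2) :
    ∀ p ∈ ts.zip vs, Aeq p.1 p.2 := by
  induction ts generalizing us vs with
  | nil => simp
  | cons t ts ih' =>
    cases us with
    | nil => simp at h1
    | cons u us =>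
      cases vs with
      | nil => simp at h2
      | cons v vs =>
        simp only [List.zip_cons_cons, List.forall_mem_cons, List.length_cons,
          Nat.add_right_cancel_iff] at *
        exact ⟨ih.1 _ _ h1'.1 h2'.1, ih' ih.2 h1 h1'.2 h2 h2'.2⟩

theorem Aeq.trans {t u v : Tm L} (h : Aeq t u) (h' : Aeq u v) : Aeq t v := by
  induction t using Tm.ind generalizing u v with
  | hv X => cases h
  | hn a => cases h; exact h'
  | ha g ts ih =>
    cases h with
    | app _ _ us hl hz =>
    cases h' with
    | app _ _ vs hl' hz' =>
    exact .app _ _ _ (hl.trans hl')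
      (aeq_zip_trans (fun t ht u v => ih t ht) hl hz hl' hz')
  | hb a t ih =>
    cases h with
    | absSame _ _ u h =>
      cases h' with
      | absSame _ _ v h' => exact .absSame _ _ _ (ih h h')
      | absDiff _ c _ v hfr h' => exact .absDiff _ _ _ _ hfr (ih h h')
    | absDiff _ b _ u hfr h =>
      cases h' with
      | absSame _ _ v h' =>
        exact .absDiff _ _ _ _ ((h'.fresh_iff a).1 hfr)
          (ih h (h'.rename (swapName_injective a b)))
      | absDiff _ c _ v hfr' h' =>
        have hs : Aeq t ((v.swap b c).swap a b) :=
          ih h (h'.rename (swapName_injective a b))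
        by_cases hac : a = c
        · subst hac
          rw [Tm.swap, Tm.swap, swapName_comm b a, rename_rename, swapName_invol,
            rename_id] at hs
          exact .absSame _ _ _ hs
        have hav : Fresh a v := by
          by_cases hab : a = b
          · subst hab; exact hfr'
          · have := ((h'.fresh_iff a).1 hfr).of_swap
            rwa [swapName_other hab hac] at this
        by_cases hbc : b = c
        · subst hbc
          rw [Tm.swap, Tm.swap, swapName_self, rename_id] at hs
          exact .absDiff _ _ _ _ hav hs
        refine .absDiff _ _ _ _ hav (ih hs ?_)
        -- `(a b)(b c) = (a c)(a b)`, and `(a b)` fixes `v` up to alpha-equivalence.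
        have hcomp : swapName a b ∘ swapName b c = swapName a c ∘ swapName a b := by
          by_cases hab : a = b
          · subst hab; rw [swapName_self]; rfl
          · rw [comp_swapName (swapName_injective a b), swapName_right,
              swapName_other (Ne.symm hac) (Ne.symm hbc)]
        have hv : VarFree v := by
          have := h'.symm.varFree_left.rename (swapName b c)
          change VarFree ((v.swap b c).swap b c) at this
          rwa [swap_swap] at this
        rw [Tm.swap, Tm.swap, rename_rename, hcomp, ← rename_rename]
        exact (swap_aeq_of_fresh hv hav hfr').rename (swapName_injective a c)

theorem subst_aeq {θ θ' : ℕ → Tm L} {t : Tm L}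
    (h : ∀ X, Tm.FVa X t → Aeq (θ X) (θ' X)) : Aeq (t.subst θ) (t.subst θ') := by
  induction t using Tm.ind with
  | hv X => simpa using h X (.var X)
  | hn a => simpa using .name a
  | ha g ts ih =>
    rw [subst_app, subst_app]
    refine .app _ _ _ (by simp) fun p hp => ?_
    rw [List.zip_map, List.mem_map] at hp
    obtain ⟨q, hq, rfl⟩ := hp
    obtain ⟨h1, h2⟩ := mem_zip_self hq
    simpa [← h2] using ih _ h1 fun X hX => h X (.app _ _ _ _ h1 hX)
  | hb a t ih => simpa using .absSame _ _ _ (ih fun X hX => h X (.abs _ _ _ hX))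

/-! ### Atoms -/

theorem NAtom.rename_id (A : NAtom L) : A.rename id = A := by
  cases A with
  | mk r ts => simp [NAtom.rename, List.map_congr_left (g := id) fun t _ => _root_.rename_id t]

theorem NAtom.rename_rename (f g : L.Name → L.Name) (A : NAtom L) :
    (A.rename g).rename f = A.rename (f ∘ g) := by
  simp [NAtom.rename, _root_.rename_rename]

theorem NAtom.rename_subst (f : L.Name → L.Name) (θ : ℕ → Tm L) (A : NAtom L) :
    (A.subst θ).rename f = (A.rename f).subst (fun X => (θ X).rename f) := by
  simp [NAtom.rename, NAtom.subst, _root_.rename_subst]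

theorem NAtom.subst_comp {θ₁ θ₂ θ₃ : ℕ → Tm L} {A : NAtom L}
    (h : ∀ X, NAtom.FVa X A → SubstComp θ₁ θ₂ θ₃ X) :
    (A.subst θ₁).subst θ₂ = A.subst θ₃ := by
  simp only [NAtom.subst, List.map_map, NAtom.mk.injEq, true_and]
  exact List.map_congr_left fun t ht => _root_.subst_comp fun X hX => h X ⟨t, ht, hX⟩

theorem NAtom.subst_id (A : NAtom L) : A.subst Tm.var = A := by
  cases A with
  | mk r ts =>
    simp [NAtom.subst, List.map_congr_left (f := Tm.subst Tm.var) (g := id)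
      fun t _ => _root_.subst_eq_self (t := t) fun X _ => rfl]

theorem AtomAeq.rename {f : L.Name → L.Name} (hf : Function.Injective f) {A B : NAtom L}
    (h : AtomAeq A B) : AtomAeq (A.rename f) (B.rename f) := by
  refine ⟨h.1, by simpa [NAtom.rename] using h.2.1, fun p hp => ?_⟩
  simp only [NAtom.rename, List.zip_map, List.mem_map] at hp
  obtain ⟨q, hq, rfl⟩ := hp
  exact (h.2.2 q hq).rename hf

theorem AtomAeq.trans {A B C : NAtom L} (h : AtomAeq A B) (h' : AtomAeq B C) :
    AtomAeq A C :=
  ⟨h.1.trans h'.1, h.2.1.trans h'.2.1,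
    aeq_zip_trans (fun _ _ _ _ => Aeq.trans) h.2.1 h.2.2 h'.2.1 h'.2.2⟩

theorem NAtom.subst_aeq {θ θ' : ℕ → Tm L} {A : NAtom L}
    (h : ∀ X, NAtom.FVa X A → Aeq (θ X) (θ' X)) : AtomAeq (A.subst θ) (A.subst θ') := by
  refine ⟨rfl, by simp [NAtom.subst], fun p hp => ?_⟩
  simp only [NAtom.subst, List.zip_map, List.mem_map] at hp
  obtain ⟨q, hq, rfl⟩ := hp
  obtain ⟨h1, h2⟩ := mem_zip_self hq
  simpa [← h2] using _root_.subst_aeq fun X hX => h X ⟨_, h1, hX⟩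

theorem AtomSim.of_rename {π : L.Name → L.Name} (hπ : IsPerm π) {A B : NAtom L}
    (h : AtomSim (A.rename π) B) : AtomSim A B := by
  obtain ⟨ρ, hρ, h⟩ := h
  exact ⟨ρ ∘ π, hρ.comp hπ, by rwa [NAtom.rename_rename] at h⟩

theorem AtomSim.trans_aeq {A B C : NAtom L} (h : AtomSim A B) (h' : AtomAeq B C) :
    AtomSim A C := by
  obtain ⟨ρ, hρ, h⟩ := h
  exact ⟨ρ, hρ, h.trans h'⟩

theorem AtomSim.rename_self {π : L.Name → L.Name} (hπ : IsPerm π) {A : NAtom L}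
    (h : AtomAeq A A) : AtomSim (A.rename π) A := by
  obtain ⟨ρ, hρ, -, h'⟩ := hπ.exists_inv
  exact ⟨ρ, hρ, by rwa [NAtom.rename_rename, h', NAtom.rename_id]⟩

/-! ### Renaming and substitution in constraints, goals and clauses -/

theorem rename_update (f : L.Name → L.Name) (θ : ℕ → Tm L) (X : ℕ) :
    (fun Y => (Function.update θ X (Tm.var X) Y).rename f) =
      Function.update (fun Y => (θ Y).rename f) X (Tm.var X) := by
  funext Y
  by_cases h : Y = X
  · subst h; simp
  · simp [h]

namespace NCon

theorem rename_id (C : NCon L) : C.rename id = C := by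
  induction C <;> simp [rename, _root_.rename_id, NAtom.rename_id, *]

theorem rename_rename (f g : L.Name → L.Name) (C : NCon L) :
    (C.rename g).rename f = C.rename (f ∘ g) := by
  induction C <;> simp [rename, _root_.rename_rename, NAtom.rename_rename, *]

theorem rename_subst (f : L.Name → L.Name) (θ : ℕ → Tm L) (C : NCon L) :
    (C.subst θ).rename f = (C.rename f).subst (fun X => (θ X).rename f) := by
  induction C generalizing θ <;>
    simp [rename, subst, _root_.rename_subst, NAtom.rename_subst, rename_update, *]

theorem subst_comp {C : NCon L} {θ₁ θ₂ θ₃ : ℕ → Tm L}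
    (h : ∀ X, FVa X C → SubstComp θ₁ θ₂ θ₃ X) :
    (C.subst θ₁).subst θ₂ = C.subst θ₃ := by
  induction C generalizing θ₁ θ₂ θ₃ with
  | tt => rfl
  | eq t u =>
    simp only [subst]
    rw [_root_.subst_comp fun X hX => h X (.eq₁ _ _ _ hX),
      _root_.subst_comp fun X hX => h X (.eq₂ _ _ _ hX)]
  | fr a t =>
    simp only [subst]
    rw [_root_.subst_comp fun X hX => h X (.frT _ _ _ hX)]
  | sim t u =>
    simp only [subst]
    rw [_root_.subst_comp fun X hX => h X (.sim₁ _ _ _ hX),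
      _root_.subst_comp fun X hX => h X (.sim₂ _ _ _ hX)]
  | simA t u =>
    simp only [subst]
    rw [NAtom.subst_comp fun X hX => h X (.simA₁ _ _ _ hX),
      NAtom.subst_comp fun X hX => h X (.simA₂ _ _ _ hX)]
  | aeqA t u =>
    simp only [subst]
    rw [NAtom.subst_comp fun X hX => h X (.aeqA₁ _ _ _ hX),
      NAtom.subst_comp fun X hX => h X (.aeqA₂ _ _ _ hX)]
  | and C C' ih ih' =>
    simp only [subst]
    rw [ih fun X hX => h X (.and₁ _ _ _ hX), ih' fun X hX => h X (.and₂ _ _ _ hX)]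
  | ex Z σ C ih =>
    simp only [subst]
    rw [ih fun X hX => SubstComp.update fun hne => h X (.ex _ _ _ _ hne hX)]
  | nu a C ih =>
    simp only [subst]
    rw [ih fun X hX => h X (.nu _ _ _ hX)]

theorem subst_id (C : NCon L) : C.subst Tm.var = C := by
  induction C <;> simp [subst, _root_.subst_eq_self, NAtom.subst_id, *]

end NCon

namespace NGoal

theorem rename_id (G : NGoal L) : G.rename id = G := by
  induction G <;> simp [rename, NCon.rename_id, NAtom.rename_id, *]

theorem rename_subst (f : L.Name → L.Name) (θ : ℕ → Tm L) (G : NGoal L) :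
    (G.subst θ).rename f = (G.rename f).subst (fun X => (θ X).rename f) := by
  induction G generalizing θ <;>
    simp [rename, subst, NCon.rename_subst, NAtom.rename_subst, rename_update, *]

theorem rename_rename (f g : L.Name → L.Name) (G : NGoal L) :
    (G.rename g).rename f = G.rename (f ∘ g) := by
  induction G <;> simp [rename, NCon.rename_rename, NAtom.rename_rename, *]

theorem subst_comp {G : NGoal L} {θ₁ θ₂ θ₃ : ℕ → Tm L}
    (h : ∀ X, FVa X G → SubstComp θ₁ θ₂ θ₃ X) :
    (G.subst θ₁).subst θ₂ = G.subst θ₃ := by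
  induction G generalizing θ₁ θ₂ θ₃ with
  | tt => rfl
  | atom A =>
    simp only [subst]
    rw [NAtom.subst_comp fun X hX => h X (.atom _ _ hX)]
  | con C =>
    simp only [subst]
    rw [NCon.subst_comp fun X hX => h X (.con _ _ hX)]
  | and G G' ih ih' =>
    simp only [subst]
    rw [ih fun X hX => h X (.and₁ _ _ _ hX), ih' fun X hX => h X (.and₂ _ _ _ hX)]
  | or G G' ih ih' =>
    simp only [subst]
    rw [ih fun X hX => h X (.or₁ _ _ _ hX), ih' fun X hX => h X (.or₂ _ _ _ hX)]
  | ex Z σ G ih =>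
    simp only [subst]
    rw [ih fun X hX => SubstComp.update fun hne => h X (.ex _ _ _ _ hne hX)]
  | nu a G ih =>
    simp only [subst]
    rw [ih fun X hX => h X (.nu _ _ _ hX)]

theorem subst_id (G : NGoal L) : G.subst Tm.var = G := by
  induction G <;> simp [subst, NCon.subst_id, NAtom.subst_id, *]

end NGoal

namespace NCl

theorem rename_id (D : NCl L) : D.rename id = D := by
  induction D <;> simp [rename, NGoal.rename_id, NAtom.rename_id, *]

theorem rename_rename (f g : L.Name → L.Name) (D : NCl L) :
    (D.rename g).rename f = D.rename (f ∘ g) := by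
  induction D <;> simp [rename, NGoal.rename_rename, NAtom.rename_rename, *]

theorem rename_subst (f : L.Name → L.Name) (θ : ℕ → Tm L) (D : NCl L) :
    (D.subst θ).rename f = (D.rename f).subst (fun X => (θ X).rename f) := by
  induction D generalizing θ <;>
    simp [rename, subst, NGoal.rename_subst, NAtom.rename_subst, rename_update, *]

theorem subst_comp {D : NCl L} {θ₁ θ₂ θ₃ : ℕ → Tm L}
    (h : ∀ X, FVa X D → SubstComp θ₁ θ₂ θ₃ X) :
    (D.subst θ₁).subst θ₂ = D.subst θ₃ := by
  induction D generalizing θ₁ θ₂ θ₃ with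
  | tt => rfl
  | atom A =>
    simp only [subst]
    rw [NAtom.subst_comp fun X hX => h X (.atom _ _ hX)]
  | and D D' ih ih' =>
    simp only [subst]
    rw [ih fun X hX => h X (.and₁ _ _ _ hX), ih' fun X hX => h X (.and₂ _ _ _ hX)]
  | imp G D ih =>
    simp only [subst]
    rw [NGoal.subst_comp fun X hX => h X (.imp₁ _ _ _ hX),
      ih fun X hX => h X (.imp₂ _ _ _ hX)]
  | all Z σ D ih =>
    simp only [subst]
    rw [ih fun X hX => SubstComp.update fun hne => h X (.all _ _ _ _ hne hX)]
  | nu a D ih =>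
    simp only [subst]
    rw [ih fun X hX => h X (.nu _ _ _ hX)]

theorem subst_id (D : NCl L) : D.subst Tm.var = D := by
  induction D <;> simp [subst, NGoal.subst_id, NAtom.subst_id, *]

theorem ClosedV.subst {D : NCl L} (h : D.ClosedV) (θ : ℕ → Tm L) : D.subst θ = D := by
  have := subst_comp (D := D) (θ₁ := Tm.var) (θ₂ := θ) (θ₃ := Tm.var)
    fun X hX => (h X hX).elim
  rwa [subst_id] at this

end NCl

theorem substSingle_rename {π ρ : L.Name → L.Name} (h : π ∘ ρ = id) (X : ℕ) (t : Tm L) :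
    substSingle X t = fun Y => (substSingle X (t.rename ρ) Y).rename π := by
  funext Y
  simp only [substSingle]
  split_ifs
  · rw [rename_rename, h, rename_id]
  · simp

/-! ### Equivariance of constraint satisfaction -/

theorem Tm.FNa.rename {f : L.Name → L.Name} (hf : Function.Injective f) {a : L.Name}
    {t : Tm L} (h : Tm.FNa a t) : Tm.FNa (f a) (t.rename f) := by
  induction h with
  | name => rw [rename_name]; exact .name _
  | app g ts t ht _ ih => rw [rename_app]; exact .app _ _ _ _ (List.mem_map_of_mem ht) ih
  | abs b t hne _ ih => rw [rename_abs]; exact .abs _ _ _ (hf.ne hne) ih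

theorem NAtom.FNa.rename {f : L.Name → L.Name} (hf : Function.Injective f) {a : L.Name}
    {A : NAtom L} (h : NAtom.FNa a A) : NAtom.FNa (f a) (A.rename f) := by
  obtain ⟨t, ht, h⟩ := h
  exact ⟨_, List.mem_map_of_mem ht, h.rename hf⟩

theorem NCon.FNa.rename {f : L.Name → L.Name} (hf : Function.Injective f) {a : L.Name}
    {C : NCon L} (h : NCon.FNa a C) : NCon.FNa (f a) (C.rename f) := by
  induction h with
  | eq₁ _ _ h => exact .eq₁ _ _ _ (h.rename hf)
  | eq₂ _ _ h => exact .eq₂ _ _ _ (h.rename hf)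
  | frN _ => exact .frN _ _
  | frT _ _ h => exact .frT _ _ _ (h.rename hf)
  | sim₁ _ _ h => exact .sim₁ _ _ _ (h.rename hf)
  | sim₂ _ _ h => exact .sim₂ _ _ _ (h.rename hf)
  | simA₁ _ _ h => exact .simA₁ _ _ _ (h.rename hf)
  | simA₂ _ _ h => exact .simA₂ _ _ _ (h.rename hf)
  | aeqA₁ _ _ h => exact .aeqA₁ _ _ _ (h.rename hf)
  | aeqA₂ _ _ h => exact .aeqA₂ _ _ _ (h.rename hf)
  | and₁ _ _ _ ih => exact .and₁ _ _ _ ih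
  | and₂ _ _ _ ih => exact .and₂ _ _ _ ih
  | ex _ _ _ _ ih => exact .ex _ _ _ _ ih
  | nu _ _ hne _ ih => exact .nu _ _ _ (hf.ne hne) ih

theorem ConSat.rename {C : NCon L} {π : L.Name → L.Name} (hπ : IsPerm π)
    (h : ConSat C) : ConSat (C.rename π) := by
  have hinj := hπ.1.injective
  obtain ⟨ρ, hρ, hπρ, hρπ⟩ := hπ.exists_inv
  match C, h with
  | .tt, h => simp [NCon.rename, ConSat]
  | .eq t u, h =>
    rw [ConSat] at h
    rw [NCon.rename, ConSat]
    exact h.rename hinj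
  | .fr a t, h =>
    rw [ConSat] at h
    rw [NCon.rename, ConSat]
    exact h.rename hinj
  | .sim t u, h =>
    rw [ConSat] at h
    rw [NCon.rename, ConSat]
    obtain ⟨τ, hτ, h⟩ := h
    refine ⟨π ∘ τ ∘ ρ, hπ.comp (hτ.comp hρ), ?_⟩
    rw [rename_rename, Function.comp_assoc, Function.comp_assoc, hρπ, Function.comp_id,
      ← rename_rename]
    exact h.rename hinj
  | .simA A B, h =>
    rw [ConSat] at h
    rw [NCon.rename, ConSat]
    obtain ⟨τ, hτ, h⟩ := h
    refine ⟨π ∘ τ ∘ ρ, hπ.comp (hτ.comp hρ), ?_⟩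
    rw [NAtom.rename_rename, Function.comp_assoc, Function.comp_assoc, hρπ,
      Function.comp_id, ← NAtom.rename_rename]
    exact h.rename hinj
  | .aeqA A B, h =>
    rw [ConSat] at h
    rw [NCon.rename, ConSat]
    exact h.rename hinj
  | .and C C', h =>
    rw [ConSat] at h
    rw [NCon.rename, ConSat]
    exact ⟨ConSat.rename hπ h.1, ConSat.rename hπ h.2⟩
  | .ex X σ C, h =>
    rw [ConSat] at h
    rw [NCon.rename, ConSat]
    obtain ⟨t, ht, h⟩ := h
    refine ⟨t.rename π, ht.rename hπ, ?_⟩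
    have := ConSat.rename hπ h
    rwa [NCon.rename_subst, show (fun Y => (substSingle X t Y).rename π) =
      substSingle X (t.rename π) by
        rw [substSingle_rename hπρ X (t.rename π), rename_rename, hρπ, rename_id]] at this
  | .nu a C, h =>
    rw [ConSat] at h
    rw [NCon.rename, ConSat]
    intro b hb hfr
    have hπb : π (ρ b) = b := congrFun hπρ b
    have := ConSat.rename hπ (h (ρ b) (by rw [hρ.2.1, hb, hπ.2.1]) fun hfn => hfr (by
      have := hfn.rename hinj
      rwa [hπb] at this))
    rwa [NCon.swap, NCon.rename_rename, comp_swapName hinj, hπb, ← NCon.rename_rename] at this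
termination_by C.size
decreasing_by all_goals (simp [NCon.size]; try omega)

theorem ConSat.of_rename {C : NCon L} {π : L.Name → L.Name} (hπ : IsPerm π)
    (h : ConSat (C.rename π)) : ConSat C := by
  obtain ⟨ρ, hρ, -, hρπ⟩ := hπ.exists_inv
  have := h.rename hρ
  rwa [NCon.rename_rename, hρπ, NCon.rename_id] at this

/-! ### Contexts and constraint sets -/

theorem satAll_insert {θ : ℕ → Tm L} {C : NCon L} {Φ : Finset (NCon L)} :
    SatAll θ (insert C Φ) ↔ ConSat (C.subst θ) ∧ SatAll θ Φ := by
  simp [SatAll]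

theorem SatAll.subset {θ : ℕ → Tm L} {Φ Φ' : Finset (NCon L)} (h : SatAll θ Φ')
    (hs : Φ ⊆ Φ') : SatAll θ Φ := fun C hC => h C (hs hC)

theorem satAll_singleton {θ : ℕ → Tm L} {C : NCon L} :
    SatAll θ {C} ↔ ConSat (C.subst θ) := by
  simp [SatAll]

theorem conSat_bigAnd {θ : ℕ → Tm L} {Φ : Finset (NCon L)} :
    ConSat ((bigAnd Φ).subst θ) ↔ SatAll θ Φ := by
  have key : ∀ l : List (NCon L),
      ConSat ((l.foldr NCon.and NCon.tt).subst θ) ↔ ∀ C ∈ l, ConSat (C.subst θ) := by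
    intro l
    induction l with
    | nil => simp [NCon.subst, ConSat]
    | cons C l ih => simp [NCon.subst, ConSat, ih]
  simpa [SatAll, bigAnd] using key Φ.toList

theorem fva_bigAnd {X : ℕ} {Φ : Finset (NCon L)} (h : NCon.FVa X (bigAnd Φ)) :
    ∃ C ∈ Φ, NCon.FVa X C := by
  have key : ∀ l : List (NCon L), NCon.FVa X (l.foldr NCon.and NCon.tt) →
      ∃ C ∈ l, NCon.FVa X C := by
    intro l h
    induction l with
    | nil => cases h
    | cons C l ih =>
      cases h with
      | and₁ _ _ h => exact ⟨C, by simp, h⟩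
      | and₂ _ _ h =>
        obtain ⟨C', hC', h⟩ := ih h
        exact ⟨C', List.mem_cons_of_mem _ hC', h⟩
  simpa using key Φ.toList h

theorem SubstOk.tail {b : CtxBind L} {Ξ : Ctxx L} {θ : ℕ → Tm L}
    (h : SubstOk (b :: Ξ) θ) : SubstOk Ξ θ := by
  cases b <;> exact h.2

theorem SubstOk.varFree {Ξ : Ctxx L} {θ : ℕ → Tm L} (h : SubstOk Ξ θ) {X : ℕ}
    (hX : X ∈ ctxVars Ξ) : VarFree (θ X) := by
  induction Ξ with
  | nil => exact hX.elim
  | cons b Ξ ih =>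
    cases b with
    | v Y σ =>
      rcases hX with rfl | hX
      · exact h.1.varFree
      · exact ih h.2 hX
    | n a => exact ih h.2 hX

/-- Changing the value at `X` to `t` keeps a substitution admissible when some admissible `θ'`
already takes at `X` a value of the same sort alpha-equivalent to `t`; nothing is required if `X` is not declared. -/
theorem SubstOk.update {Ξ : Ctxx L} {θ : ℕ → Tm L} (h : SubstOk Ξ θ) {X : ℕ} {t : Tm L}
    {σ : NomSort L.NSort L.DSort} (ht : IsTm t σ)
    (hX : X ∈ ctxVars Ξ → ∃ θ', SubstOk Ξ θ' ∧ IsTm (θ' X) σ ∧ Aeq (θ' X) t) :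
    SubstOk Ξ (Function.update θ X t) := by
  induction Ξ with
  | nil => trivial
  | cons b Ξ ih =>
    cases b with
    | v Y τ =>
      refine ⟨?_, ih h.2 fun hm => ?_⟩
      · by_cases hY : Y = X
        · subst hY
          obtain ⟨θ', h1, h2, -⟩ := hX (Set.mem_insert _ _)
          rw [Function.update_self, ← h2.sort_unique h1.1]
          exact ht
        · rw [Function.update_of_ne hY]; exact h.1
      · obtain ⟨θ', h1, h2⟩ := hX (Set.mem_insert_of_mem _ hm)
        exact ⟨θ', h1.tail, h2⟩
    | n a =>
      refine ⟨fun Y hY => ?_, ih h.2 fun hm => ?_⟩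
      · by_cases hYX : Y = X
        · subst hYX
          obtain ⟨θ', h1, -, h2⟩ := hX hY
          rw [Function.update_self, ← h2.fresh_iff]
          exact h1.1 Y hY
        · rw [Function.update_of_ne hYX]; exact h.1 Y hY
      · obtain ⟨θ', h1, h2⟩ := hX hm
        exact ⟨θ', h1.tail, h2⟩

/-- No admissible substitution satisfies the constraints, so every entailment holds. -/
def Incons (Ξ : Ctxx L) (Φ : Finset (NCon L)) : Prop := ∀ θ, SubstOk Ξ θ → ¬ SatAll θ Φ

theorem Incons.entC {Ξ : Ctxx L} {Φ : Finset (NCon L)} (h : Incons Ξ Φ) (C : NCon L) :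
    EntC Ξ Φ C := fun θ h1 h2 => (h θ h1 h2).elim

theorem Incons.cons {Ξ : Ctxx L} {Φ : Finset (NCon L)} (h : Incons Ξ Φ) (b : CtxBind L)
    (C : NCon L) : Incons (b :: Ξ) (insert C Φ) :=
  fun θ h1 h2 => h θ h1.tail (satAll_insert.1 h2).2

/-- The constraint `X ≈ t`. -/
abbrev pin (X : ℕ) (t : Tm L) : NCon L := NCon.eq (Tm.var X) t

theorem conSat_pin {θ : ℕ → Tm L} {X : ℕ} {t : Tm L} (ht : VarFree t) :
    ConSat ((pin X t).subst θ) ↔ Aeq (θ X) t := by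
  rw [pin, NCon.subst, ConSat, subst_var, ht.subst]

theorem entC_ex_pin {Ξ : Ctxx L} {Φ : Finset (NCon L)} {X : ℕ} {t : Tm L}
    {σ : NomSort L.NSort L.DSort} (ht : IsTm t σ) : EntC Ξ Φ (NCon.ex X σ (pin X t)) := by
  intro θ _ _
  rw [NCon.subst, ConSat]
  refine ⟨t, ht, ?_⟩
  have hv := ht.varFree
  simpa [NCon.subst, ConSat, hv.subst, substSingle] using hv.aeq_refl

/-- A quantifier re-binding a declared variable `X` yields a context in which the old value and
the witness `t` must coincide; if they cannot, pinning both is inconsistent. -/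
theorem incons_rebind {Ξ : Ctxx L} {θ : ℕ → Tm L} (h : SubstOk Ξ θ) {X : ℕ} {t : Tm L}
    {σ : NomSort L.NSort L.DSort} (ht : IsTm t σ) (hX : X ∈ ctxVars Ξ)
    (hbad : SubstOk Ξ (Function.update θ X t) → ¬ Aeq (θ X) t) :
    Incons (CtxBind.v X σ :: Ξ) (insert (pin X t) {pin X (θ X)}) := by
  intro θ' h1 h2
  rw [satAll_insert, satAll_singleton, conSat_pin ht.varFree, conSat_pin (h.varFree hX)] at h2
  exact hbad (h.update ht fun _ => ⟨θ', h1.tail, h1.1, h2.1⟩) (h2.2.symm.trans h2.1)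

theorem substComp_single {θ : ℕ → Tm L} {X Y : ℕ} {t : Tm L}
    (h : Y ≠ X → VarFree (θ Y)) :
    SubstComp (Function.update θ X (Tm.var X)) (substSingle X t) (Function.update θ X t) Y := by
  by_cases hY : Y = X
  · subst hY; left; simp [substSingle]
  · right; simpa [hY] using h hY

/-- Closing the constraints found under a variable binder by an existential quantifier. -/
theorem satAll_ex_bigAnd {Ξ : Ctxx L} {θ : ℕ → Tm L} (h : SubstOk Ξ θ) {X : ℕ} {t : Tm L}
    {σ : NomSort L.NSort L.DSort} (ht : IsTm t σ) {Φ : Finset (NCon L)}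
    (hΦ : ∀ C ∈ Φ, ∀ Y, NCon.FVa Y C → Y ∈ ctxVars (CtxBind.v X σ :: Ξ))
    (hs : SatAll (Function.update θ X t) Φ) :
    SatAll θ {NCon.ex X σ (bigAnd Φ)} := by
  rw [satAll_singleton, NCon.subst, ConSat]
  refine ⟨t, ht, ?_⟩
  rw [NCon.subst_comp (θ₃ := Function.update θ X t), conSat_bigAnd]
  · exact hs
  · intro Y hY
    obtain ⟨C, hC, hY⟩ := fva_bigAnd hY
    exact substComp_single fun hne => h.varFree ((hΦ C hC Y hY).resolve_left hne)

theorem entC_self {Ξ : Ctxx L} {C : NCon L} : EntC Ξ {C} C :=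
  fun _ _ h => satAll_singleton.1 h

theorem entC_nu_tt {Ξ : Ctxx L} {Φ : Finset (NCon L)} {a : L.Name} :
    EntC Ξ Φ (NCon.nu a NCon.tt) := by
  intro θ _ _
  rw [NCon.subst, ConSat]
  intro b _ _
  simp [NCon.subst, NCon.swap, NCon.rename, ConSat]

/-! ### Weakening and derivations from inconsistent constraints -/

theorem mono_insert {Ξ : Ctxx L} {b : CtxBind L} {Φ Φ' : Finset (NCon L)} {C : NCon L}
    (hm : ∀ θ, SubstOk Ξ θ → SatAll θ Φ' → SatAll θ Φ) (θ : ℕ → Tm L)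
    (h1 : SubstOk (b :: Ξ) θ) (h2 : SatAll θ (insert C Φ')) : SatAll θ (insert C Φ) :=
  satAll_insert.2 ⟨(satAll_insert.1 h2).1, hm θ h1.tail (satAll_insert.1 h2).2⟩

mutual
theorem UD.mono {Δ : Set (NCl L)} : ∀ {Ξ : Ctxx L} {Φ : Finset (NCon L)} {G : NGoal L},
    UD Δ Ξ Φ G → ∀ {Φ'}, (∀ θ, SubstOk Ξ θ → SatAll θ Φ' → SatAll θ Φ) → UD Δ Ξ Φ' G
  | _, _, _, .top _ _, _, _ => .top _ _
  | _, _, _, .con _ _ _ h, _, hm => .con _ _ _ fun θ h1 h2 => h θ h1 (hm θ h1 h2)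
  | _, _, _, .andR _ _ _ _ h1 h2, _, hm => .andR _ _ _ _ (UD.mono h1 hm) (UD.mono h2 hm)
  | _, _, _, .orR₁ _ _ _ _ h, _, hm => .orR₁ _ _ _ _ (UD.mono h hm)
  | _, _, _, .orR₂ _ _ _ _ h, _, hm => .orR₂ _ _ _ _ (UD.mono h hm)
  | _, _, _, .exR _ _ _ _ C _ hC h, _, hm =>
    .exR _ _ _ _ C _ (fun θ h1 h2 => hC θ h1 (hm θ h1 h2)) (UD.mono h (mono_insert hm))
  | _, _, _, .nuR _ _ _ C _ hC h, _, hm =>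
    .nuR _ _ _ C _ (fun θ h1 h2 => hC θ h1 (hm θ h1 h2)) (UD.mono h (mono_insert hm))
  | _, _, _, .sel _ _ D _ hD h, _, hm => .sel _ _ D _ hD (FD.mono h hm)

theorem FD.mono {Δ : Set (NCl L)} :
    ∀ {Ξ : Ctxx L} {Φ : Finset (NCon L)} {D : NCl L} {A : NAtom L},
    FD Δ Ξ Φ D A → ∀ {Φ'}, (∀ θ, SubstOk Ξ θ → SatAll θ Φ' → SatAll θ Φ) → FD Δ Ξ Φ' D A
  | _, _, _, _, .hyp _ _ _ _ h, _, hm => .hyp _ _ _ _ fun θ h1 h2 => h θ h1 (hm θ h1 h2)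
  | _, _, _, _, .andL₁ _ _ _ _ _ h, _, hm => .andL₁ _ _ _ _ _ (FD.mono h hm)
  | _, _, _, _, .andL₂ _ _ _ _ _ h, _, hm => .andL₂ _ _ _ _ _ (FD.mono h hm)
  | _, _, _, _, .impL _ _ _ _ _ h1 h2, _, hm =>
    .impL _ _ _ _ _ (FD.mono h1 hm) (UD.mono h2 hm)
  | _, _, _, _, .allL _ _ _ _ C _ _ hC h, _, hm =>
    .allL _ _ _ _ C _ _ (fun θ h1 h2 => hC θ h1 (hm θ h1 h2)) (FD.mono h (mono_insert hm))
  | _, _, _, _, .nuL _ _ _ C _ _ hC h, _, hm =>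
    .nuL _ _ _ C _ _ (fun θ h1 h2 => hC θ h1 (hm θ h1 h2)) (FD.mono h (mono_insert hm))
end

/-- The propositional skeleton of a goal, with every constraint true and every atom read
as `P`. -/
def SkG (P : Prop) : NGoal L → Prop
  | .tt => True
  | .atom _ => P
  | .con _ => True
  | .and G G' => SkG P G ∧ SkG P G'
  | .or G G' => SkG P G ∨ SkG P G'
  | .ex _ _ G => SkG P G
  | .nu _ G => SkG P G

/-- Some head atom of the clause is guarded only by goals whose skeleton holds. -/
def SkC (P : Prop) : NCl L → Prop
  | .tt => False
  | .atom _ => True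
  | .and D D' => SkC P D ∨ SkC P D'
  | .imp G D => SkG P G ∧ SkC P D
  | .all _ _ D => SkC P D
  | .nu _ D => SkC P D

theorem skG_rename (P : Prop) (f : L.Name → L.Name) (G : NGoal L) :
    SkG P (G.rename f) ↔ SkG P G := by
  induction G <;> simp [SkG, NGoal.rename, *]

theorem skG_subst (P : Prop) (θ : ℕ → Tm L) (G : NGoal L) :
    SkG P (G.subst θ) ↔ SkG P G := by
  induction G generalizing θ <;> simp [SkG, NGoal.subst, *]

theorem skC_rename (P : Prop) (f : L.Name → L.Name) (D : NCl L) :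
    SkC P (D.rename f) ↔ SkC P D := by
  induction D <;> simp [SkC, NCl.rename, skG_rename, *]

theorem skC_subst (P : Prop) (θ : ℕ → Tm L) (D : NCl L) :
    SkC P (D.subst θ) ↔ SkC P D := by
  induction D generalizing θ <;> simp [SkC, NCl.subst, skG_subst, *]

theorem GoalSat.skG {S : Set (NAtom L)} {G : NGoal L} (h : GoalSat S G) :
    SkG S.Nonempty G := by
  match G, h with
  | .tt, _ => trivial
  | .atom A, h => rw [GoalSat] at h; exact ⟨A, h⟩
  | .con _, _ => trivial
  | .and G G', h => rw [GoalSat] at h; exact ⟨GoalSat.skG h.1, GoalSat.skG h.2⟩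
  | .or G G', h =>
    rw [GoalSat] at h
    exact h.imp (fun h => GoalSat.skG h) (fun h => GoalSat.skG h)
  | .ex X σ G, h =>
    rw [GoalSat] at h
    obtain ⟨t, _, h⟩ := h
    exact (skG_subst _ (substSingle X t) G).1 (GoalSat.skG h)
  | .nu a G, h =>
    rw [GoalSat] at h
    exact (skG_rename _ (swapName a a) G).1 (GoalSat.skG (h a rfl fun hfn => by cases hfn; contradiction))
termination_by G.size
decreasing_by all_goals (simp [NGoal.size]; try omega)

theorem skC_of_mem_tOp {S : Set (NAtom L)} {D : NCl L} {B : NAtom L}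
    (h : B ∈ TOp D S) (hB : B ∉ S) : SkC S.Nonempty D := by
  match D, h with
  | .tt, h => rw [TOp] at h; exact hB h
  | .atom A, h => trivial
  | .and D D', h =>
    rw [TOp] at h
    exact h.imp (fun h => skC_of_mem_tOp h hB) (fun h => skC_of_mem_tOp h hB)
  | .imp G D, h =>
    rw [TOp] at h
    split_ifs at h with hG
    · exact ⟨hG.skG, skC_of_mem_tOp h hB⟩
    · exact (hB h).elim
  | .all X σ D, h =>
    rw [TOp] at h
    simp only [Set.mem_iUnion] at h
    obtain ⟨t, _, h⟩ := h
    exact (skC_subst _ (substSingle X t) D).1 (skC_of_mem_tOp h hB)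
  | .nu a D, h =>
    rw [TOp] at h
    simp only [Set.mem_iUnion] at h
    obtain ⟨b, _, h⟩ := h
    exact (skC_rename _ (swapName a b) D).1 (skC_of_mem_tOp h hB)
termination_by D.size
decreasing_by all_goals (simp [NCl.size]; try omega)

theorem UD.of_incons {Δ : Set (NCl L)} {P : Prop}
    (hP : P → ∀ Ξ Φ A, Incons Ξ Φ → UD Δ Ξ Φ (NGoal.atom A)) {G : NGoal L} (h : SkG P G)
    {Ξ : Ctxx L} {Φ : Finset (NCon L)} (hi : Incons Ξ Φ) : UD Δ Ξ Φ G := by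
  induction G generalizing Ξ Φ with
  | tt => exact .top _ _
  | atom A => exact hP h _ _ _ hi
  | con C => exact .con _ _ _ (hi.entC C)
  | and G G' ih ih' => exact .andR _ _ _ _ (ih h.1 hi) (ih' h.2 hi)
  | or G G' ih ih' =>
    exact h.elim (fun h => .orR₁ _ _ _ _ (ih h hi)) (fun h => .orR₂ _ _ _ _ (ih' h hi))
  | ex X σ G ih => exact .exR _ _ _ _ .tt _ (hi.entC _) (ih h (hi.cons _ _))
  | nu a G ih => exact .nuR _ _ _ .tt _ (hi.entC _) (ih h (hi.cons _ _))

theorem FD.of_incons {Δ : Set (NCl L)} {P : Prop}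
    (hP : P → ∀ Ξ Φ A, Incons Ξ Φ → UD Δ Ξ Φ (NGoal.atom A)) {D : NCl L} (h : SkC P D)
    {Ξ : Ctxx L} {Φ : Finset (NCon L)} (hi : Incons Ξ Φ) (A : NAtom L) : FD Δ Ξ Φ D A := by
  induction D generalizing Ξ Φ with
  | tt => exact h.elim
  | atom A' => exact .hyp _ _ _ _ (hi.entC _)
  | and D D' ih ih' =>
    exact h.elim (fun h => .andL₁ _ _ _ _ _ (ih h hi)) (fun h => .andL₂ _ _ _ _ _ (ih' h hi))
  | imp G D ih => exact .impL _ _ _ _ _ (ih h.2 hi) (UD.of_incons hP h.1 hi)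
  | all X σ D ih => exact .allL _ _ _ _ .tt _ _ (hi.entC _) (ih h (hi.cons _ _))
  | nu a D ih => exact .nuL _ _ _ .tt _ _ (hi.entC _) (ih h (hi.cons _ _))

/-- Once some iterate is nonempty, the program has a clause that fires on the empty
interpretation; under inconsistent constraints that clause proves every atom. -/
theorem UD.atom_of_incons {Δ : Set (NCl L)} {i : ℕ} (h : ((TProg Δ)^[i] ∅).Nonempty)
    (Ξ : Ctxx L) (Φ : Finset (NCon L)) (A : NAtom L) (hi : Incons Ξ Φ) :
    UD Δ Ξ Φ (NGoal.atom A) := by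
  have hne : (TProg Δ ∅).Nonempty := by
    by_contra hn
    rw [Set.not_nonempty_iff_eq_empty] at hn
    rw [Function.iterate_fixed hn] at h
    exact Set.not_nonempty_empty h
  obtain ⟨B, hB⟩ := hne
  simp only [TProg, Set.mem_iUnion] at hB
  obtain ⟨D, hD, hB⟩ := hB
  exact .sel _ _ D _ hD (FD.of_incons (fun h => (Set.not_nonempty_empty h).elim)
    (skC_of_mem_tOp hB (Set.notMem_empty B)) hi A)

/-! ### Binders: witnesses, and the two ways a binder can clash with its context -/

/-- All free variables of the constraints in `Φ` are declared in `Ξ`. -/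
def VarsDecl (Ξ : Ctxx L) (Φ : Finset (NCon L)) : Prop :=
  ∀ C ∈ Φ, ∀ X, NCon.FVa X C → X ∈ ctxVars Ξ

theorem VarsDecl.union {Ξ : Ctxx L} {Φ Φ' : Finset (NCon L)} (h : VarsDecl Ξ Φ)
    (h' : VarsDecl Ξ Φ') : VarsDecl Ξ (Φ ∪ Φ') :=
  fun C hC => (Finset.mem_union.1 hC).elim (h C) (h' C)

theorem SatAll.union {θ : ℕ → Tm L} {Φ Φ' : Finset (NCon L)} (h : SatAll θ Φ)
    (h' : SatAll θ Φ') : SatAll θ (Φ ∪ Φ') :=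
  fun C hC => (Finset.mem_union.1 hC).elim (h C) (h' C)

theorem varsDecl_ex_bigAnd {Ξ : Ctxx L} {X : ℕ} {σ : NomSort L.NSort L.DSort}
    {Φ : Finset (NCon L)} (h : VarsDecl (CtxBind.v X σ :: Ξ) Φ) :
    VarsDecl Ξ {NCon.ex X σ (bigAnd Φ)} := by
  intro C hC Y hY
  rw [Finset.mem_singleton] at hC
  subst hC
  cases hY with
  | ex _ _ _ hne hY =>
    obtain ⟨C, hC, hY⟩ := fva_bigAnd hY
    exact (h C hC Y hY).resolve_left hne

theorem varsDecl_pin {Ξ : Ctxx L} {θ : ℕ → Tm L} (h : SubstOk Ξ θ) {X : ℕ}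
    (hX : X ∈ ctxVars Ξ) : VarsDecl Ξ {pin X (θ X)} := by
  intro C hC Y hY
  rw [Finset.mem_singleton] at hC
  subst hC
  cases hY with
  | eq₁ _ _ hY => cases hY; exact hX
  | eq₂ _ _ hY => exact (h.varFree hX Y hY).elim

theorem satAll_pin {Ξ : Ctxx L} {θ : ℕ → Tm L} (h : SubstOk Ξ θ) {X : ℕ}
    (hX : X ∈ ctxVars Ξ) : SatAll θ {pin X (θ X)} :=
  satAll_singleton.2 ((conSat_pin (h.varFree hX)).2 (h.varFree hX).aeq_refl)

/-- A witness `t` for a variable binder either extends `θ` to the new context without changing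
the value of a declared variable up to alpha-equivalence, or clashes with a declaration of the same variable. -/
theorem rebind_cases {Ξ : Ctxx L} {θ : ℕ → Tm L} (h : SubstOk Ξ θ) (X : ℕ) {t : Tm L}
    {σ : NomSort L.NSort L.DSort} (ht : IsTm t σ) :
    (SubstOk (CtxBind.v X σ :: Ξ) (Function.update θ X t) ∧
      (X ∈ ctxVars Ξ → Aeq (θ X) t)) ∨
    (X ∈ ctxVars Ξ ∧
      Incons (CtxBind.v X σ :: Ξ) (insert (pin X t) {pin X (θ X)})) := by
  have hself : IsTm (Function.update θ X t X) σ := by rwa [Function.update_self]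
  by_cases hX : X ∈ ctxVars Ξ
  · by_cases hok : SubstOk Ξ (Function.update θ X t) ∧ Aeq (θ X) t
    · exact .inl ⟨⟨hself, hok.1⟩, fun _ => hok.2⟩
    · exact .inr ⟨hX, incons_rebind h ht hX fun h1 h2 => hok ⟨h1, h2⟩⟩
  · exact .inl ⟨⟨hself, h.update ht fun h' => (hX h').elim⟩, fun h' => (hX h').elim⟩

/-- A name binder `#a` is either respected by `θ`, or pinning the value of an offending variable
is inconsistent in the extended context. -/
theorem fresh_cases {Ξ : Ctxx L} {θ : ℕ → Tm L} (h : SubstOk Ξ θ) (a : L.Name) :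
    SubstOk (CtxBind.n a :: Ξ) θ ∨
    ∃ X ∈ ctxVars Ξ, Incons (CtxBind.n a :: Ξ) (insert NCon.tt {pin X (θ X)}) := by
  by_cases hf : ∀ X ∈ ctxVars Ξ, Fresh a (θ X)
  · exact .inl ⟨hf, h⟩
  · push Not at hf
    obtain ⟨X, hX, hn⟩ := hf
    refine .inr ⟨X, hX, fun θ' h1 h2 => hn ?_⟩
    rw [satAll_insert, satAll_singleton, conSat_pin (h.varFree hX)] at h2
    exact (h2.2.fresh_iff a).1 (h1.1 X hX)

theorem NGoal.inst_rename {π ρ : L.Name → L.Name} (hπρ : π ∘ ρ = id) {G : NGoal L}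
    {θ : ℕ → Tm L} {X : ℕ} (t : Tm L) (hv : ∀ Y, FVa Y G → Y ≠ X → VarFree (θ Y)) :
    ((G.subst (Function.update θ X (Tm.var X))).rename π).subst (substSingle X t) =
      (G.subst (Function.update θ X (t.rename ρ))).rename π := by
  rw [substSingle_rename hπρ, ← rename_subst, subst_comp fun Y hY => substComp_single (hv Y hY)]

theorem NCl.inst_rename {π ρ : L.Name → L.Name} (hπρ : π ∘ ρ = id) {D : NCl L}
    {θ : ℕ → Tm L} {X : ℕ} (t : Tm L) (hv : ∀ Y, FVa Y D → Y ≠ X → VarFree (θ Y)) :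
    ((D.subst (Function.update θ X (Tm.var X))).rename π).subst (substSingle X t) =
      (D.subst (Function.update θ X (t.rename ρ))).rename π := by
  rw [substSingle_rename hπρ, ← rename_subst, subst_comp fun Y hY => substComp_single (hv Y hY)]

theorem mono_bigAnd {Ξ : Ctxx L} {Φ Φ' : Finset (NCon L)} (θ : ℕ → Tm L) (_ : SubstOk Ξ θ)
    (h : SatAll θ (insert (bigAnd Φ) Φ')) : SatAll θ Φ :=
  conSat_bigAnd.1 (satAll_insert.1 h).1

/-! ### Completeness -/

/-- Goals true in `S` are derivable from satisfied constraints. Compared with the theorem, the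
instance of the goal may be renamed by a permutation, names need not be declared, and `Φ` uses
only declared variables. -/
def GoalComplete (Δ : Set (NCl L)) (S : Set (NAtom L)) (G : NGoal L) : Prop :=
  ∀ (Ξ : Ctxx L) (θ : ℕ → Tm L) (π : L.Name → L.Name), SubstOk Ξ θ → IsPerm π →
    (∀ X, NGoal.FVa X G → X ∈ ctxVars Ξ) → GoalSat S ((G.subst θ).rename π) →
    ∃ Φ, VarsDecl Ξ Φ ∧ SatAll θ Φ ∧ UD Δ Ξ Φ G

/-- Atoms newly produced by `D` from `S` are derivable by focusing on `D`. The instance of the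
clause may be renamed by a permutation, and the produced atom `B` matches the instance of `A`
only up to `∼`. -/
def ClauseComplete (Δ : Set (NCl L)) (S : Set (NAtom L)) (D : NCl L) : Prop :=
  ∀ (Ξ : Ctxx L) (θ : ℕ → Tm L) (π : L.Name → L.Name) (A B : NAtom L), SubstOk Ξ θ →
    IsPerm π → (∀ X, NCl.FVa X D → X ∈ ctxVars Ξ) → (∀ X, NAtom.FVa X A → X ∈ ctxVars Ξ) →
    B ∈ TOp ((D.subst θ).rename π) S → B ∉ S → AtomSim B (A.subst θ) →
    ∃ Φ, VarsDecl Ξ Φ ∧ SatAll θ Φ ∧ FD Δ Ξ Φ D A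

/-- The goal part for a fixed interpretation reduces to atoms. The hypothesis `hP` supplies
derivations of atoms from inconsistent constraints, used when a binder clashes. -/
theorem goalComplete_of_atom {Δ : Set (NCl L)} {S : Set (NAtom L)}
    (hP : S.Nonempty → ∀ Ξ Φ A, Incons Ξ Φ → UD Δ Ξ Φ (NGoal.atom A))
    (hA : ∀ A, GoalComplete Δ S (.atom A)) (G : NGoal L) : GoalComplete Δ S G := by
  induction G with
  | tt => exact fun Ξ θ π _ _ _ _ => ⟨∅, by simp [VarsDecl], by simp [SatAll], .top _ _⟩
  | atom A => exact hA A
  | con C =>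
    intro Ξ θ π hθ hπ hv hs
    rw [NGoal.subst, NGoal.rename, GoalSat] at hs
    refine ⟨{C}, fun C' hC' X hX => ?_, satAll_singleton.2 (hs.of_rename hπ),
      .con _ _ _ entC_self⟩
    rw [Finset.mem_singleton] at hC'
    exact hv X (.con _ _ (hC' ▸ hX))
  | and G G' ih ih' =>
    intro Ξ θ π hθ hπ hv hs
    rw [NGoal.subst, NGoal.rename, GoalSat] at hs
    obtain ⟨Φ, h1, h2, h3⟩ := ih Ξ θ π hθ hπ (fun X hX => hv X (.and₁ _ _ _ hX)) hs.1
    obtain ⟨Φ', h1', h2', h3'⟩ := ih' Ξ θ π hθ hπ (fun X hX => hv X (.and₂ _ _ _ hX)) hs.2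
    exact ⟨Φ ∪ Φ', h1.union h1', h2.union h2', .andR _ _ _ _
      (h3.mono fun _ _ h => h.subset Finset.subset_union_left)
      (h3'.mono fun _ _ h => h.subset Finset.subset_union_right)⟩
  | or G G' ih ih' =>
    intro Ξ θ π hθ hπ hv hs
    rw [NGoal.subst, NGoal.rename, GoalSat] at hs
    rcases hs with hs | hs
    · obtain ⟨Φ, h1, h2, h3⟩ := ih Ξ θ π hθ hπ (fun X hX => hv X (.or₁ _ _ _ hX)) hs
      exact ⟨Φ, h1, h2, .orR₁ _ _ _ _ h3⟩
    · obtain ⟨Φ, h1, h2, h3⟩ := ih' Ξ θ π hθ hπ (fun X hX => hv X (.or₂ _ _ _ hX)) hs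
      exact ⟨Φ, h1, h2, .orR₂ _ _ _ _ h3⟩
  | ex X σ G ih =>
    intro Ξ θ π hθ hπ hv hs
    rw [NGoal.subst, NGoal.rename, GoalSat] at hs
    obtain ⟨t, ht, hs⟩ := hs
    obtain ⟨ρ, hρ, hπρ, -⟩ := hπ.exists_inv
    have ht' := ht.rename hρ
    rw [NGoal.inst_rename hπρ t fun Y hY hne => hθ.varFree (hv Y (.ex _ _ _ _ hne hY))] at hs
    rcases rebind_cases hθ X ht' with ⟨hok, -⟩ | ⟨hX, hi⟩
    · have hv' : ∀ Y, NGoal.FVa Y G → Y ∈ ctxVars (CtxBind.v X σ :: Ξ) := fun Y hY => by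
        by_cases hne : Y = X
        · exact .inl hne
        · exact .inr (hv Y (.ex _ _ _ _ hne hY))
      obtain ⟨Φ, h1, h2, h3⟩ := ih _ _ π hok hπ hv' hs
      exact ⟨_, varsDecl_ex_bigAnd h1, satAll_ex_bigAnd hθ ht' h1 h2,
        .exR _ _ _ _ (bigAnd Φ) _ entC_self (h3.mono mono_bigAnd)⟩
    · exact ⟨_, varsDecl_pin hθ hX, satAll_pin hθ hX, .exR _ _ _ _ _ _ (entC_ex_pin ht')
        (UD.of_incons hP ((skG_subst _ _ _).1 ((skG_rename _ _ _).1 hs.skG)) hi)⟩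
  | nu a G ih =>
    intro Ξ θ π hθ hπ hv hs
    rw [NGoal.subst, NGoal.rename, GoalSat] at hs
    -- The bound name itself is an admissible instance, and then the swapping is trivial.
    have hs := hs (π a) rfl fun hfn => by cases hfn; contradiction
    rw [NGoal.swap, swapName_self, NGoal.rename_id] at hs
    have hv' : ∀ X, NGoal.FVa X G → X ∈ ctxVars Ξ := fun X hX => hv X (.nu _ _ _ hX)
    rcases fresh_cases hθ a with hok | ⟨X, hX, hi⟩
    · obtain ⟨Φ, h1, h2, h3⟩ := ih _ _ π hok hπ hv' hs
      exact ⟨Φ, h1, h2, .nuR _ _ _ .tt _ entC_nu_tt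
        (h3.mono fun _ _ h => h.subset (Finset.subset_insert _ _))⟩
    · exact ⟨_, varsDecl_pin hθ hX, satAll_pin hθ hX, .nuR _ _ _ .tt _ entC_nu_tt
        (UD.of_incons hP ((skG_subst _ _ _).1 ((skG_rename _ _ _).1 hs.skG)) hi)⟩

/-- The clause part for a fixed interpretation follows from the goal part, which handles the
bodies of implications. -/
theorem clauseComplete_of_goal {Δ : Set (NCl L)} {S : Set (NAtom L)}
    (hP : S.Nonempty → ∀ Ξ Φ A, Incons Ξ Φ → UD Δ Ξ Φ (NGoal.atom A))
    (hG : ∀ G, GoalComplete Δ S G) (D : NCl L) : ClauseComplete Δ S D := by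
  induction D with
  | tt =>
    intro Ξ θ π A B hθ hπ hv hvA hB hBS hsim
    rw [NCl.subst, NCl.rename, TOp] at hB
    exact (hBS hB).elim
  | atom A' =>
    intro Ξ θ π A B hθ hπ hv hvA hB hBS hsim
    rw [NCl.subst, NCl.rename, TOp] at hB
    obtain rfl := hB.resolve_left hBS
    refine ⟨{NCon.simA A' A}, fun C hC X hX => ?_,
      satAll_singleton.2 ?_, .hyp _ _ _ _ entC_self⟩
    · rw [Finset.mem_singleton] at hC
      subst hC
      cases hX with
      | simA₁ _ _ hX => exact hv X (.atom _ _ hX)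
      | simA₂ _ _ hX => exact hvA X hX
    · rw [NCon.subst, ConSat]
      exact hsim.of_rename hπ
  | and D D' ih ih' =>
    intro Ξ θ π A B hθ hπ hv hvA hB hBS hsim
    rw [NCl.subst, NCl.rename, TOp] at hB
    rcases hB with hB | hB
    · obtain ⟨Φ, h1, h2, h3⟩ :=
        ih Ξ θ π A B hθ hπ (fun X hX => hv X (.and₁ _ _ _ hX)) hvA hB hBS hsim
      exact ⟨Φ, h1, h2, .andL₁ _ _ _ _ _ h3⟩
    · obtain ⟨Φ, h1, h2, h3⟩ :=
        ih' Ξ θ π A B hθ hπ (fun X hX => hv X (.and₂ _ _ _ hX)) hvA hB hBS hsim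
      exact ⟨Φ, h1, h2, .andL₂ _ _ _ _ _ h3⟩
  | imp G D ih =>
    intro Ξ θ π A B hθ hπ hv hvA hB hBS hsim
    rw [NCl.subst, NCl.rename, TOp] at hB
    split_ifs at hB with hs
    · obtain ⟨Φ, h1, h2, h3⟩ :=
        ih Ξ θ π A B hθ hπ (fun X hX => hv X (.imp₂ _ _ _ hX)) hvA hB hBS hsim
      obtain ⟨Φ', h1', h2', h3'⟩ :=
        hG G Ξ θ π hθ hπ (fun X hX => hv X (.imp₁ _ _ _ hX)) hs
      exact ⟨Φ ∪ Φ', h1.union h1', h2.union h2', .impL _ _ _ _ _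
        (h3.mono fun _ _ h => h.subset Finset.subset_union_left)
        (h3'.mono fun _ _ h => h.subset Finset.subset_union_right)⟩
    · exact (hBS hB).elim
  | all X σ D ih =>
    intro Ξ θ π A B hθ hπ hv hvA hB hBS hsim
    rw [NCl.subst, NCl.rename, TOp] at hB
    simp only [Set.mem_iUnion] at hB
    obtain ⟨t, ht, hB⟩ := hB
    obtain ⟨ρ, hρ, hπρ, -⟩ := hπ.exists_inv
    have ht' := ht.rename hρ
    rw [NCl.inst_rename hπρ t fun Y hY hne => hθ.varFree (hv Y (.all _ _ _ _ hne hY))] at hB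
    rcases rebind_cases hθ X ht' with ⟨hok, hXt⟩ | ⟨hX, hi⟩
    · have hv' : ∀ Y, NCl.FVa Y D → Y ∈ ctxVars (CtxBind.v X σ :: Ξ) := fun Y hY => by
        by_cases hne : Y = X
        · exact .inl hne
        · exact .inr (hv Y (.all _ _ _ _ hne hY))
      have hAeq : AtomAeq (A.subst θ) (A.subst (Function.update θ X (t.rename ρ))) := by
        refine NAtom.subst_aeq fun Y hY => ?_
        by_cases hne : Y = X
        · subst hne
          rw [Function.update_self]
          exact hXt (hvA Y hY)
        · rw [Function.update_of_ne hne]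
          exact (hθ.varFree (hvA Y hY)).aeq_refl
      obtain ⟨Φ, h1, h2, h3⟩ := ih _ _ π A B hok hπ hv'
        (fun Y hY => Or.inr (hvA Y hY)) hB hBS (hsim.trans_aeq hAeq)
      exact ⟨_, varsDecl_ex_bigAnd h1, satAll_ex_bigAnd hθ ht' h1 h2,
        .allL _ _ _ _ (bigAnd Φ) _ _ entC_self (h3.mono mono_bigAnd)⟩
    · exact ⟨_, varsDecl_pin hθ hX, satAll_pin hθ hX, .allL _ _ _ _ _ _ _ (entC_ex_pin ht')
        (FD.of_incons hP ((skC_subst _ _ _).1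
          ((skC_rename _ _ _).1 (skC_of_mem_tOp hB hBS))) hi A)⟩
  | nu a D ih =>
    intro Ξ θ π A B hθ hπ hv hvA hB hBS hsim
    rw [NCl.subst, NCl.rename, TOp] at hB
    simp only [Set.mem_iUnion] at hB
    obtain ⟨b, hb, hB⟩ := hB
    -- The swapping chosen by the operator is absorbed into the permutation.
    rw [NCl.swap, NCl.rename_rename] at hB
    have hv' : ∀ X, NCl.FVa X D → X ∈ ctxVars Ξ := fun X hX => hv X (.nu _ _ _ hX)
    rcases fresh_cases hθ a with hok | ⟨X, hX, hi⟩
    · obtain ⟨Φ, h1, h2, h3⟩ :=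
        ih _ _ _ A B hok ((IsPerm.swapName hb.1.symm).comp hπ) hv' hvA hB hBS hsim
      exact ⟨Φ, h1, h2, .nuL _ _ _ .tt _ _ entC_nu_tt
        (h3.mono fun _ _ h => h.subset (Finset.subset_insert _ _))⟩
    · exact ⟨_, varsDecl_pin hθ hX, satAll_pin hθ hX, .nuL _ _ _ .tt _ _ entC_nu_tt
        (FD.of_incons hP ((skC_subst _ _ _).1
          ((skC_rename _ _ _).1 (skC_of_mem_tOp hB hBS))) hi A)⟩

/-- Induction on the number of iterations: an atom that appears at stage `i + 1` is produced by
a program clause acting on stage `i`. -/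
theorem goalComplete_iterate {Δ : Set (NCl L)} (hclv : ∀ D ∈ Δ, NCl.ClosedV D) (i : ℕ)
    (G : NGoal L) : GoalComplete Δ ((TProg Δ)^[i] ∅) G := by
  induction i generalizing G with
  | zero =>
    refine goalComplete_of_atom UD.atom_of_incons (fun A Ξ θ π _ _ _ hs => ?_) G
    rw [NGoal.subst, NGoal.rename, GoalSat] at hs
    exact hs.elim
  | succ i ih =>
    refine goalComplete_of_atom UD.atom_of_incons (fun A Ξ θ π hθ hπ hv hs => ?_) G
    by_cases hi : (A.subst θ).rename π ∈ (TProg Δ)^[i] ∅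
    · refine ih (.atom A) Ξ θ π hθ hπ hv ?_
      rw [NGoal.subst, NGoal.rename, GoalSat]
      exact hi
    · rw [NGoal.subst, NGoal.rename, GoalSat, Function.iterate_succ_apply', TProg] at hs
      simp only [Set.mem_iUnion] at hs
      obtain ⟨D, hD, hs⟩ := hs
      have hvA : ∀ X, NAtom.FVa X A → X ∈ ctxVars Ξ := fun X hX => hv X (.atom _ _ hX)
      obtain ⟨Φ, h1, h2, h3⟩ := clauseComplete_of_goal UD.atom_of_incons ih D Ξ θ id A
        ((A.subst θ).rename π) hθ IsPerm.id (fun X hX => (hclv D hD X hX).elim) hvA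
        (by rwa [NCl.rename_id, (hclv D hD).subst]) hi
        (AtomSim.rename_self hπ
          (NAtom.subst_aeq fun X hX => (hθ.varFree (hvA X hX)).aeq_refl))
      exact ⟨Φ, h1, h2, .sel _ _ D _ hD h3⟩

/-! **Statement 10.**  The completeness step relating the iterates of `T_Δ`
to uniform/focused proof search. -/
theorem stmt10 (L : NomSig)
    (hinhab : ∀ σ : NomSort L.NSort L.DSort, ∃ t : Tm L, IsTm t σ)
    (Δ : Set (NCl L)) (hfin : Δ.Finite) (hne : Δ.Nonempty)
    (hclv : ∀ D ∈ Δ, NCl.ClosedV D) (hcln : ∀ D ∈ Δ, NCl.ClosedN D)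
    (hws : ∀ D ∈ Δ, ∀ vs : ℕ → NomSort L.NSort L.DSort, NCl.WS vs D)
    (i : ℕ) (Ξ : Ctxx L) (hΞ : CtxWF Ξ) :
    (∀ (θ : ℕ → Tm L) (G : NGoal L), SubstOk Ξ θ → GoalDecl Ξ G →
      GoalSat ((TProg Δ)^[i] ∅) (G.subst θ) →
      ∃ Φ : Finset (NCon L), (SubstOk Ξ θ ∧ SatAll θ Φ) ∧ UD Δ Ξ Φ G) ∧
    (∀ (θ : ℕ → Tm L) (D : NCl L) (A : NAtom L), SubstOk Ξ θ → ClDecl Ξ D →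
      AtomDecl Ξ A →
      A.subst θ ∈ TOp (D.subst θ) ((TProg Δ)^[i] ∅) →
      A.subst θ ∉ (TProg Δ)^[i] ∅ →
      ∃ Φ : Finset (NCon L), (SubstOk Ξ θ ∧ SatAll θ Φ) ∧ FD Δ Ξ Φ D A) := by
  refine ⟨fun θ G hθ hG hs => ?_, fun θ D A hθ hD hA hmem hnot => ?_⟩
  · obtain ⟨Φ, -, h2, h3⟩ := goalComplete_iterate hclv i G Ξ θ id hθ IsPerm.id hG.1
      (by rwa [NGoal.rename_id])
    exact ⟨Φ, ⟨hθ, h2⟩, h3⟩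
  · have hrefl : AtomAeq (A.subst θ) (A.subst θ) :=
      NAtom.subst_aeq fun X hX => (hθ.varFree (hA.1 X hX)).aeq_refl
    obtain ⟨Φ, -, h2, h3⟩ := clauseComplete_of_goal UD.atom_of_incons
      (goalComplete_iterate hclv i) D Ξ θ id A (A.subst θ) hθ IsPerm.id hD.1 hA.1
      (by rwa [NCl.rename_id]) hnot ⟨id, IsPerm.id, by rwa [NAtom.rename_id]⟩
    exact ⟨Φ, ⟨hθ, h2⟩, h3⟩

end
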